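/- The Lorentzian length is upper semicontinuous: if γ_j is a sequence of causal curves in I×X converging uniformly to a causal curve γ, then limsup_{j→∞} τ(γ_j) ≤ τ(γ). -/

import Mathlib

open Filter MeasureTheory Set Topology
open scoped ENNReal NNReal

noncomputable section

/-- The metric speed of a curve `β` at time `t` w.r.t. a distance function `dist`. -/
def mSpeed {X : Type*} (dst : X → X → ℝ) (β : ℝ → X) (t : ℝ) : ℝ :=
  Filter.limsup (fun e : ℝ => dst (β (t + e)) (β t) / |e|) (nhdsWithin (0 : ℝ) {0}ᶜ)

/-- The generalized metric speed `v_β(s,t)` of a curve `β` w.r.t. the family of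
metrics `d`. -/
def genSpeed {X : Type*} (d : ℝ → X → X → ℝ) (β : ℝ → X) (s t : ℝ) : ℝ :=
  Filter.limsup (fun e : ℝ => (∫ u in t..(t + e), mSpeed (d s) β u) / e)
    (nhdsWithin (0 : ℝ) {0}ᶜ)

/-- Absolute continuity of a curve on `[a,b]` w.r.t. a distance function. -/
def ACOn {X : Type*} (dst : X → X → ℝ) (β : ℝ → X) (a b : ℝ) : Prop :=
  ∃ g : ℝ → ℝ, MeasureTheory.IntegrableOn g (Set.Icc a b) ∧
    ∀ ⦃t u : ℝ⦄, t ∈ Set.Icc a b → u ∈ Set.Icc a b → t ≤ u →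
      dst (β t) (β u) ≤ ∫ r in t..u, g r

/-- The standard distance on `ℝ`. -/
def rdist : ℝ → ℝ → ℝ := fun x y => |x - y|

/-- `d` is a family of metrics on `X` indexed by `s ∈ I`, each generating the
topology of `X`. -/
def IsMetricFamily {X : Type*} [TopologicalSpace X] (I : Set ℝ) (d : ℝ → X → X → ℝ) : Prop :=
  ∀ s ∈ I,
    (∀ x : X, d s x x = 0) ∧ (∀ x y : X, x ≠ y → 0 < d s x y) ∧
    (∀ x y : X, d s x y = d s y x) ∧ (∀ x y z : X, d s x z ≤ d s x y + d s y z) ∧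
    (∀ x : X, (nhds x).HasBasis (fun ε : ℝ => 0 < ε) (fun ε => {y | d s x y < ε}))

/-- Condition (C): local uniform continuity of `s ↦ d_s` in a logarithmic sense. -/
def CondC {X : Type*} [TopologicalSpace X] (I : Set ℝ) (d : ℝ → X → X → ℝ) : Prop :=
  ∀ J : Set ℝ, ∀ K : Set X, J ⊆ I → IsCompact J → IsCompact K →
    ∃ r > (0 : ℝ), ∃ ω : ℝ → ℝ, ω 0 = 0 ∧ Monotone ω ∧ ContinuousAt ω 0 ∧
      ∀ s ∈ J, ∀ s' ∈ J, ∀ x ∈ K, ∀ y ∈ K, x ≠ y →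
        sInf ((fun u => d u x y) '' J) < r →
        |Real.log (d s x y / d s' x y)| ≤ ω |s - s'|

/-- Condition (L): local log-Lipschitz dependence of `d_s` on `s`. -/
def CondL {X : Type*} [TopologicalSpace X] (I : Set ℝ) (d : ℝ → X → X → ℝ) : Prop :=
  ∀ J : Set ℝ, ∀ K : Set X, J ⊆ I → IsCompact J → IsCompact K →
    ∃ C > (0 : ℝ), ∃ r > (0 : ℝ),
      ∀ s ∈ J, ∀ s' ∈ J, ∀ x ∈ K, ∀ y ∈ K, x ≠ y →
        sInf ((fun u => d u x y) '' J) < r →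
        |Real.log (d s x y / d s' x y)| ≤ C * |s - s'|

/-- Condition (H): Lipschitz continuity of `h` in the time variable, locally
uniformly. -/
def CondH {X : Type*} [TopologicalSpace X] (I : Set ℝ) (h : ℝ → X → ℝ) : Prop :=
  ∀ J : Set ℝ, ∀ K : Set X, J ⊆ I → IsCompact J → IsCompact K →
    ∃ C' > (0 : ℝ), ∀ s ∈ J, ∀ s' ∈ J, ∀ x ∈ K, |h s x - h s' x| ≤ C' * |s - s'|

/-- A curve `(α, β) : [a,b] → I × X` with both components absolutely continuous. -/
def CurveIn {X : Type*} (I : Set ℝ) (d : ℝ → X → X → ℝ) (α : ℝ → ℝ) (β : ℝ → X)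
    (a b : ℝ) : Prop :=
  a < b ∧ ACOn rdist α a b ∧ (∀ s ∈ I, ACOn (d s) β a b) ∧ ∀ t ∈ Set.Icc a b, α t ∈ I

/-- Future directed: `α' > 0` a.e. -/
def FutureDirected (α : ℝ → ℝ) (a b : ℝ) : Prop :=
  ∀ᵐ t : ℝ, t ∈ Set.Ioo a b → 0 < deriv α t

/-- Past directed: `α' < 0` a.e. -/
def PastDirected (α : ℝ → ℝ) (a b : ℝ) : Prop :=
  ∀ᵐ t : ℝ, t ∈ Set.Ioo a b → deriv α t < 0

/-- The causality inequality `v_β(α_t,t)² ≤ h(γ_t)² α'(t)²` a.e. -/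
def CausalIneq {X : Type*} (d : ℝ → X → X → ℝ) (h : ℝ → X → ℝ) (α : ℝ → ℝ)
    (β : ℝ → X) (a b : ℝ) : Prop :=
  ∀ᵐ t : ℝ, t ∈ Set.Ioo a b →
    (genSpeed d β (α t) t) ^ 2 ≤ (h (α t) (β t)) ^ 2 * (deriv α t) ^ 2

/-- The timelike inequality `v_β(α_t,t)² < h(γ_t)² α'(t)²` a.e. -/
def TimelikeIneq {X : Type*} (d : ℝ → X → X → ℝ) (h : ℝ → X → ℝ) (α : ℝ → ℝ)
    (β : ℝ → X) (a b : ℝ) : Prop :=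
  ∀ᵐ t : ℝ, t ∈ Set.Ioo a b →
    (genSpeed d β (α t) t) ^ 2 < (h (α t) (β t)) ^ 2 * (deriv α t) ^ 2

/-- Future directed causal curve. -/
def FutureCausal {X : Type*} (I : Set ℝ) (d : ℝ → X → X → ℝ) (h : ℝ → X → ℝ)
    (α : ℝ → ℝ) (β : ℝ → X) (a b : ℝ) : Prop :=
  CurveIn I d α β a b ∧ FutureDirected α a b ∧ CausalIneq d h α β a b

/-- Future directed timelike curve. -/
def FutureTimelike {X : Type*} (I : Set ℝ) (d : ℝ → X → X → ℝ) (h : ℝ → X → ℝ)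
    (α : ℝ → ℝ) (β : ℝ → X) (a b : ℝ) : Prop :=
  CurveIn I d α β a b ∧ FutureDirected α a b ∧ TimelikeIneq d h α β a b

/-- Causal curve (future or past directed). -/
def CausalCurve {X : Type*} (I : Set ℝ) (d : ℝ → X → X → ℝ) (h : ℝ → X → ℝ)
    (α : ℝ → ℝ) (β : ℝ → X) (a b : ℝ) : Prop :=
  CurveIn I d α β a b ∧ (FutureDirected α a b ∨ PastDirected α a b) ∧
    CausalIneq d h α β a b

/-- The causal relation `p ≤ q` in the generalized Lorentzian product. -/
def causalRel {X : Type*} (I : Set ℝ) (d : ℝ → X → X → ℝ) (h : ℝ → X → ℝ)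
    (p q : ℝ × X) : Prop :=
  ∃ a b α β, FutureCausal I d h α β a b ∧
    α a = p.1 ∧ β a = p.2 ∧ α b = q.1 ∧ β b = q.2

/-- The chronological relation `p ≪ q` in the generalized Lorentzian product. -/
def chronRel {X : Type*} (I : Set ℝ) (d : ℝ → X → X → ℝ) (h : ℝ → X → ℝ)
    (p q : ℝ × X) : Prop :=
  ∃ a b α β, FutureTimelike I d h α β a b ∧
    α a = p.1 ∧ β a = p.2 ∧ α b = q.1 ∧ β b = q.2

/-- The Lorentzian length of a curve. -/
def lorLen {X : Type*} (d : ℝ → X → X → ℝ) (h : ℝ → X → ℝ) (α : ℝ → ℝ) (β : ℝ → X)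
    (a b : ℝ) : ℝ :=
  ∫ t in a..b,
    Real.sqrt ((h (α t) (β t)) ^ 2 * (deriv α t) ^ 2 - (genSpeed d β (α t) t) ^ 2)

/-- The time separation function `τ` of the generalized Lorentzian product. -/
def timeSep {X : Type*} (I : Set ℝ) (d : ℝ → X → X → ℝ) (h : ℝ → X → ℝ)
    (p q : ℝ × X) : ℝ≥0∞ :=
  sSup {l | ∃ a b α β, FutureCausal I d h α β a b ∧
    α a = p.1 ∧ β a = p.2 ∧ α b = q.1 ∧ β b = q.2 ∧
    l = ENNReal.ofReal (lorLen d h α β a b)}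

end

open Filter MeasureTheory Set Topology
open scoped ENNReal

/-- `D` is a metric on `ℝ × X` generating the product topology. -/
def IsCompatibleProdMetric {X : Type*} [TopologicalSpace X]
    (D : (ℝ × X) → (ℝ × X) → ℝ) : Prop :=
  (∀ p, D p p = 0) ∧ (∀ p q, p ≠ q → 0 < D p q) ∧ (∀ p q, D p q = D q p) ∧
  (∀ p q r, D p r ≤ D p q + D q r) ∧
  (∀ p : ℝ × X, (nhds p).HasBasis (fun ε : ℝ => 0 < ε) (fun ε => {q | D p q < ε}))


namespace LorentzianLength

section MetricDerivative

variable {Y : Type*} [PseudoMetricSpace Y]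

/-- `g` is an integrable majorant of the speed of the curve `β` on the whole line. -/
structure IsSpeedBound (β : ℝ → Y) (g : ℝ → ℝ) : Prop where
  integrable : Integrable g
  nonneg : ∀ t, 0 ≤ g t
  dist_le : ∀ t u, t ≤ u → dist (β t) (β u) ≤ ∫ r in t..u, g r

namespace IsSpeedBound

variable {β : ℝ → Y} {g : ℝ → ℝ}

lemma dist_le_abs (hβ : IsSpeedBound β g) (t u : ℝ) :
    dist (β t) (β u) ≤ |∫ r in t..u, g r| := by
  rcases le_total t u with h | h
  · exact (hβ.dist_le t u h).trans (le_abs_self _)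
  · rw [dist_comm, intervalIntegral.integral_symm, abs_neg]
    exact (hβ.dist_le u t h).trans (le_abs_self _)

lemma dist_le_dist_primitive (hβ : IsSpeedBound β g) (c t u : ℝ) :
    dist (β t) (β u) ≤ dist (∫ r in c..t, g r) (∫ r in c..u, g r) := by
  rw [Real.dist_eq, intervalIntegral.integral_interval_sub_left
    hβ.integrable.intervalIntegrable hβ.integrable.intervalIntegrable,
    intervalIntegral.integral_symm, abs_neg]
  exact hβ.dist_le_abs t u

lemma absolutelyContinuousOnInterval (hβ : IsSpeedBound β g) (a b : ℝ) :
    AbsolutelyContinuousOnInterval β a b := by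
  have hg : AbsolutelyContinuousOnInterval (fun x => ∫ r in a..x, g r) a b :=
    hβ.integrable.intervalIntegrable.absolutelyContinuousOnInterval_intervalIntegral (by simp)
  refine squeeze_zero (fun E => Finset.sum_nonneg fun _ _ => dist_nonneg) (fun E => ?_) hg
  exact Finset.sum_le_sum fun i _ => hβ.dist_le_dist_primitive a _ _

lemma continuous (hβ : IsSpeedBound β g) : Continuous β := by
  rw [continuous_iff_continuousAt]
  intro t
  have hP : Continuous fun u => ∫ r in (0 : ℝ)..u, g r :=
    intervalIntegral.continuous_primitive (fun _ _ => hβ.integrable.intervalIntegrable) 0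
  exact tendsto_iff_dist_tendsto_zero.2 (squeeze_zero (fun _ => dist_nonneg)
    (fun u => hβ.dist_le_dist_primitive 0 u t) (tendsto_iff_dist_tendsto_zero.1 (hP.tendsto t)))

lemma comp_dist (hβ : IsSpeedBound β g) (y : Y) : IsSpeedBound (fun t => dist (β t) y) g where
  integrable := hβ.integrable
  nonneg := hβ.nonneg
  dist_le t u h := (dist_dist_dist_le_left _ _ _).trans (hβ.dist_le t u h)

end IsSpeedBound

lemma ae_tendsto_average {g : ℝ → ℝ} (hg : Integrable g) :
    ∀ᵐ t, Tendsto (fun e => (∫ r in t..(t + e), g r) / e) (𝓝[≠] 0) (𝓝 (g t)) := by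
  filter_upwards [_root_.LocallyIntegrable.ae_hasDerivAt_integral hg.locallyIntegrable] with t ht
  have := hasDerivAt_iff_tendsto_slope_zero.1 (ht t)
  refine this.congr fun e => ?_
  simp [div_eq_inv_mul]

namespace IsSpeedBound

section Real

variable {φ g : ℝ → ℝ}

lemma ae_differentiableAt (hφ : IsSpeedBound φ g) : ∀ᵐ t, DifferentiableAt ℝ φ t := by
  have : ∀ᵐ t, ∀ n : ℕ, t ∈ uIcc (-(n : ℝ)) n → DifferentiableAt ℝ φ t :=
    ae_all_iff.2 fun n => (hφ.absolutelyContinuousOnInterval _ _).ae_differentiableAt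
  filter_upwards [this] with t ht
  obtain ⟨n, hn⟩ := exists_nat_ge |t|
  refine ht n ?_
  rw [uIcc_of_le (by linarith [abs_nonneg t])]
  exact abs_le.1 hn

lemma integral_deriv (hφ : IsSpeedBound φ g) (t u : ℝ) :
    ∫ r in t..u, deriv φ r = φ u - φ t :=
  (hφ.absolutelyContinuousOnInterval t u).integral_deriv_eq_sub

lemma ae_tendsto_abs_slope (hφ : IsSpeedBound φ g) :
    ∀ᵐ t, Tendsto (fun e => |φ (t + e) - φ t| / |e|) (𝓝[≠] 0) (𝓝 |deriv φ t|) := by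
  filter_upwards [hφ.ae_differentiableAt] with t ht
  have := (hasDerivAt_iff_tendsto_slope_zero.1 ht.hasDerivAt).abs
  refine this.congr fun e => ?_
  simp [abs_mul, abs_inv, div_eq_inv_mul]

lemma ae_abs_deriv_le (hφ : IsSpeedBound φ g) : ∀ᵐ t, |deriv φ t| ≤ g t := by
  filter_upwards [hφ.ae_tendsto_abs_slope, ae_tendsto_average hφ.integrable] with t h1 h2
  have h2' := h2.abs
  rw [abs_of_nonneg (hφ.nonneg t)] at h2'
  refine le_of_tendsto_of_tendsto' h1 h2' fun e => ?_
  rw [abs_div]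
  refine div_le_div_of_nonneg_right ?_ (abs_nonneg _)
  rw [← Real.dist_eq, dist_comm]
  exact hφ.dist_le_abs _ _

lemma integrable_deriv (hφ : IsSpeedBound φ g) : Integrable (deriv φ) :=
  hφ.integrable.mono' (measurable_deriv φ).aestronglyMeasurable hφ.ae_abs_deriv_le

end Real

variable {β : ℝ → Y} {g : ℝ → ℝ}

/-- A curve with integrable speed bound has a metric derivative almost everywhere, which is itself
the smallest speed bound. -/
theorem exists_metricDerivative (hβ : IsSpeedBound β g) :
    ∃ m : ℝ → ℝ, IsSpeedBound β m ∧
      ∀ᵐ t, Tendsto (fun e => dist (β (t + e)) (β t) / |e|) (𝓝[≠] 0) (𝓝 (m t)) := by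
  let φ : ℚ → ℝ → ℝ := fun q t => dist (β t) (β q)
  have hφ : ∀ q, IsSpeedBound (φ q) g := fun q => hβ.comp_dist _
  let M : ℝ → ℝ≥0∞ := fun t => ⨆ q, ‖deriv (φ q) t‖ₑ
  have hMm : Measurable M := .iSup fun q => (measurable_deriv (φ q)).enorm
  have hle : ∀ᵐ t, ∀ q, |deriv (φ q) t| ≤ g t := ae_all_iff.2 fun q => (hφ q).ae_abs_deriv_le
  have hMle : ∀ᵐ t, M t ≤ ENNReal.ofReal (g t) := by
    filter_upwards [hle] with t ht
    refine iSup_le fun q => ?_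
    rw [Real.enorm_eq_ofReal_abs]
    exact ENNReal.ofReal_le_ofReal (ht q)
  let m : ℝ → ℝ := fun t => (M t).toReal
  have hm0 : ∀ t, 0 ≤ m t := fun t => ENNReal.toReal_nonneg
  have hmg : ∀ᵐ t, m t ≤ g t := by
    filter_upwards [hMle] with t ht
    exact ENNReal.toReal_le_of_le_ofReal (hβ.nonneg t) ht
  have hm : Integrable m := by
    refine hβ.integrable.mono' hMm.ennreal_toReal.aestronglyMeasurable ?_
    filter_upwards [hmg] with t ht
    rwa [Real.norm_of_nonneg (hm0 t)]
  have hofReal : ∀ᵐ t, ENNReal.ofReal (m t) = M t := by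
    filter_upwards [hMle] with t ht
    exact ENNReal.ofReal_toReal (ht.trans_lt ENNReal.ofReal_lt_top).ne
  have hφm : ∀ᵐ t, ∀ q, |deriv (φ q) t| ≤ m t := by
    filter_upwards [hofReal] with t ht q
    rw [← ENNReal.ofReal_le_ofReal_iff (hm0 t), ht, ← Real.enorm_eq_ofReal_abs]
    exact le_iSup (fun q => ‖deriv (φ q) t‖ₑ) q
  have hdist : ∀ t u, t ≤ u → dist (β t) (β u) ≤ ∫ r in t..u, m r := by
    intro t u htu
    have key : ∀ q : ℚ, |φ q u - φ q t| ≤ ∫ r in t..u, m r := by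
      intro q
      rw [← (hφ q).integral_deriv t u]
      refine (intervalIntegral.abs_integral_le_integral_abs htu).trans ?_
      refine intervalIntegral.integral_mono_ae htu (hφ q).integrable_deriv.abs.intervalIntegrable
        hm.intervalIntegrable ?_
      filter_upwards [hφm] with r hr using hr q
    have hc : Continuous fun x : ℝ => |dist (β u) (β x) - dist (β t) (β x)| := by
      have := hβ.continuous
      fun_prop
    have hcl : IsClosed {x : ℝ | |dist (β u) (β x) - dist (β t) (β x)| ≤ ∫ r in t..u, m r} :=
      isClosed_le hc continuous_const
    have := Rat.isDenseEmbedding_coe_real.dense.induction (P := fun x : ℝ =>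
      |dist (β u) (β x) - dist (β t) (β x)| ≤ ∫ r in t..u, m r)
      (by rintro _ ⟨q, rfl⟩; exact key q) hcl u
    simpa using this
  have hmB : IsSpeedBound β m := ⟨hm, hm0, hdist⟩
  refine ⟨m, hmB, ?_⟩
  have hslope : ∀ᵐ t, ∀ q, Tendsto (fun e => |φ q (t + e) - φ q t| / |e|) (𝓝[≠] 0)
      (𝓝 |deriv (φ q) t|) := ae_all_iff.2 fun q => (hφ q).ae_tendsto_abs_slope
  filter_upwards [hslope, ae_tendsto_average hm, hofReal] with t h1 h2 h3
  have h2' := h2.abs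
  rw [abs_of_nonneg (hm0 t)] at h2'
  have hup : ∀ e, dist (β (t + e)) (β t) / |e| ≤ |(∫ r in t..(t + e), m r) / e| := by
    intro e
    rw [abs_div]
    gcongr
    rw [dist_comm]
    exact hmB.dist_le_abs _ _
  rw [tendsto_order]
  refine ⟨fun c hc => ?_, fun c hc => ?_⟩
  · rcases lt_or_ge c 0 with hc0 | hc0
    · exact Eventually.of_forall fun e => hc0.trans_le (by positivity)
    have : ENNReal.ofReal c < M t := by
      rw [← h3]
      exact (ENNReal.ofReal_lt_ofReal_iff (hc0.trans_lt hc)).2 hc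
    obtain ⟨q, hq⟩ := lt_iSup_iff.1 this
    rw [Real.enorm_eq_ofReal_abs, ENNReal.ofReal_lt_ofReal_iff_of_nonneg hc0] at hq
    filter_upwards [(h1 q).eventually_const_lt hq] with e he
    refine he.trans_le ?_
    gcongr
    exact (Real.dist_eq _ _).symm.le.trans (dist_dist_dist_le_left _ _ _)
  · filter_upwards [h2'.eventually_lt_const hc] with e he using (hup e).trans_lt he

lemma ae_tendsto_mSpeed (hβ : IsSpeedBound β g) :
    ∀ᵐ t, Tendsto (fun e => dist (β (t + e)) (β t) / |e|) (𝓝[≠] 0)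
      (𝓝 (mSpeed dist β t)) := by
  obtain ⟨m, -, hm⟩ := hβ.exists_metricDerivative
  filter_upwards [hm] with t ht
  have : mSpeed dist β t = m t := ht.limsup_eq
  rwa [this]

end IsSpeedBound

lemma mSpeed_nonneg {X : Type*} {dst : X → X → ℝ} (hdst : ∀ x y, 0 ≤ dst x y) (β : ℝ → X) (t : ℝ) :
    0 ≤ mSpeed dst β t := by
  refine Real.sInf_nonneg fun c hc => ?_
  have hc' : ∀ᶠ e in 𝓝[≠] (0 : ℝ), dst (β (t + e)) (β t) / |e| ≤ c := hc
  obtain ⟨e, he⟩ := hc'.exists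
  exact (div_nonneg (hdst _ _) (abs_nonneg _)).trans he

lemma IsSpeedBound.mSpeed {β : ℝ → Y} {g : ℝ → ℝ} (hβ : IsSpeedBound β g) :
    IsSpeedBound β (mSpeed dist β) := by
  obtain ⟨m, hm, ht⟩ := hβ.exists_metricDerivative
  have hae : m =ᵐ[volume] _root_.mSpeed dist β := by
    filter_upwards [ht] with t ht using ht.limsup_eq.symm
  refine ⟨hm.integrable.congr hae, mSpeed_nonneg (fun _ _ => dist_nonneg) β, fun t u htu => ?_⟩
  rw [← intervalIntegral.integral_congr_ae (hae.mono fun x hx _ => hx)]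
  exact hm.dist_le t u htu

end MetricDerivative

section Integrals

/-- The reverse triangle inequality in integral form, for a measurable field of causal vectors in
two-dimensional Minkowski space. -/
lemma integral_sqrt_sq_sub_sq_le {Ω : Type*} [MeasurableSpace Ω] {μ : Measure Ω} {x y : Ω → ℝ}
    (hx : Integrable x μ) (hy : Integrable y μ) (hy0 : ∀ᵐ t ∂μ, 0 ≤ y t)
    (hyx : ∀ᵐ t ∂μ, y t ≤ x t) :
    ∫ t, √(x t ^ 2 - y t ^ 2) ∂μ ≤ √((∫ t, x t ∂μ) ^ 2 - (∫ t, y t ∂μ) ^ 2) := by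
  have memLp : ∀ f : Ω → ℝ, Integrable f μ → (∀ᵐ t ∂μ, 0 ≤ f t) →
      MemLp (fun t => √(f t)) (ENNReal.ofReal 2) μ := by
    intro f hf hf0
    have hm : AEStronglyMeasurable (fun t => √(f t)) μ :=
      Real.continuous_sqrt.comp_aestronglyMeasurable hf.aestronglyMeasurable
    rw [ENNReal.ofReal_ofNat, memLp_two_iff_integrable_sq hm]
    refine hf.congr ?_
    filter_upwards [hf0] with t ht using (Real.sq_sqrt ht).symm
  have hsub0 : ∀ᵐ t ∂μ, 0 ≤ x t - y t := hyx.mono fun t ht => sub_nonneg.2 ht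
  have hadd0 : ∀ᵐ t ∂μ, 0 ≤ x t + y t := by
    filter_upwards [hy0, hyx] with t h1 h2 using by linarith
  have hsq : ∀ f : Ω → ℝ, (∀ᵐ t ∂μ, 0 ≤ f t) → ∫ t, √(f t) ^ (2 : ℝ) ∂μ = ∫ t, f t ∂μ := by
    intro f hf
    refine integral_congr_ae ?_
    filter_upwards [hf] with t ht
    rw [Real.rpow_two, Real.sq_sqrt ht]
  have key := integral_mul_le_Lp_mul_Lq_of_nonneg Real.HolderConjugate.two_two
    (μ := μ) (f := fun t => √(x t - y t)) (g := fun t => √(x t + y t))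
    (.of_forall fun _ => Real.sqrt_nonneg _) (.of_forall fun _ => Real.sqrt_nonneg _)
    (memLp _ (hx.sub hy) hsub0) (memLp _ (hx.add hy) hadd0)
  rw [hsq _ hsub0, hsq _ hadd0, ← Real.sqrt_eq_rpow, ← Real.sqrt_eq_rpow, integral_sub hx hy,
    integral_add hx hy] at key
  have h0 : 0 ≤ ∫ t, x t ∂μ - ∫ t, y t ∂μ := by
    rw [← integral_sub hx hy]
    exact integral_nonneg_of_ae hsub0
  rw [← Real.sqrt_mul h0] at key
  refine (integral_congr_ae ?_).trans_le (key.trans_eq (by ring_nf))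
  filter_upwards [hsub0] with t ht
  rw [← Real.sqrt_mul ht]
  ring_nf

lemma integral_Ioc_eq_convolution (f : ℝ → ℝ) {ε : ℝ} (hε : 0 ≤ ε) (t : ℝ) :
    ∫ r in t..(t + ε), f r =
      convolution f ((Ico (-ε) 0).indicator fun _ => (1 : ℝ)) (ContinuousLinearMap.mul ℝ ℝ)
        volume t := by
  rw [intervalIntegral.integral_of_le (by linarith), ← integral_indicator measurableSet_Ioc]
  refine integral_congr_ae (.of_forall fun r => ?_)
  by_cases hr : r ∈ Ioc t (t + ε)
  · have : t - r ∈ Ico (-ε) 0 := ⟨by linarith [hr.2], by linarith [hr.1]⟩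
    simp [hr, this]
  · have : t - r ∉ Ico (-ε) 0 := fun h => hr ⟨by linarith [h.2], by linarith [h.1]⟩
    simp only [indicator_of_notMem hr, indicator_of_notMem this, map_zero]

lemma integrable_integral_window {f : ℝ → ℝ} (hf : Integrable f) {ε : ℝ} (hε : 0 ≤ ε) :
    Integrable fun t => ∫ r in t..(t + ε), f r := by
  have h1 : Integrable ((Ico (-ε) 0).indicator fun _ => (1 : ℝ)) :=
    (integrable_indicator_iff measurableSet_Ico).2 (integrableOn_const (by simp))
  refine (hf.integrable_convolution (ContinuousLinearMap.mul ℝ ℝ) h1).congr ?_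
  exact .of_forall fun t => (integral_Ioc_eq_convolution f hε t).symm

lemma integral_integral_window {f : ℝ → ℝ} (hf : Integrable f) {ε : ℝ} (hε : 0 ≤ ε) :
    ∫ t, ∫ r in t..(t + ε), f r = ε * ∫ t, f t := by
  have h1 : Integrable ((Ico (-ε) 0).indicator fun _ => (1 : ℝ)) :=
    (integrable_indicator_iff measurableSet_Ico).2 (integrableOn_const (by simp))
  simp_rw [integral_Ioc_eq_convolution f hε]
  rw [integral_convolution (ContinuousLinearMap.mul ℝ ℝ) hf h1,
    integral_indicator measurableSet_Ico]
  simp [hε, mul_comm]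

/-- A one-sided generalized dominated convergence theorem, obtained from Fatou's lemma. -/
lemma eventually_integral_le_of_tendsto_ae {Ω : Type*} [MeasurableSpace Ω] {μ : Measure Ω}
    {q G : ℕ → Ω → ℝ} {q₀ G₀ : Ω → ℝ} (hq : ∀ n, Integrable (q n) μ)
    (hG : ∀ n, Integrable (G n) μ) (hq₀ : Integrable q₀ μ) (hG₀ : Integrable G₀ μ)
    (hqG : ∀ n, ∀ᵐ t ∂μ, q n t ≤ G n t) (hint : ∀ n, ∫ t, G n t ∂μ ≤ ∫ t, G₀ t ∂μ)
    (hqt : ∀ᵐ t ∂μ, Tendsto (fun n => q n t) atTop (𝓝 (q₀ t)))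
    (hGt : ∀ᵐ t ∂μ, Tendsto (fun n => G n t) atTop (𝓝 (G₀ t))) {δ : ℝ} (hδ : 0 < δ) :
    ∀ᶠ n in atTop, ∫ t, q n t ∂μ ≤ ∫ t, q₀ t ∂μ + δ := by
  have hle₀ : ∀ᵐ t ∂μ, 0 ≤ G₀ t - q₀ t := by
    filter_upwards [hqt, hGt, ae_all_iff.2 hqG] with t h1 h2 h3
    exact sub_nonneg.2 (le_of_tendsto_of_tendsto' h1 h2 h3)
  have hle : ∀ n, ∀ᵐ t ∂μ, 0 ≤ G n t - q n t := fun n =>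
    (hqG n).mono fun t ht => sub_nonneg.2 ht
  have fatou : ENNReal.ofReal (∫ t, (G₀ t - q₀ t) ∂μ) ≤
      liminf (fun n => ENNReal.ofReal (∫ t, (G n t - q n t) ∂μ)) atTop := by
    rw [ofReal_integral_eq_lintegral_ofReal (f := fun t => G₀ t - q₀ t) (hG₀.sub hq₀) hle₀]
    have : ∀ n, ENNReal.ofReal (∫ t, (G n t - q n t) ∂μ) =
        ∫⁻ t, ENNReal.ofReal (G n t - q n t) ∂μ := fun n =>
      ofReal_integral_eq_lintegral_ofReal ((hG n).sub (hq n)) (hle n)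
    simp_rw [this]
    refine le_trans (lintegral_mono_ae ?_) (lintegral_liminf_le' fun n =>
      (((hG n).sub (hq n)).aestronglyMeasurable.aemeasurable).ennreal_ofReal)
    filter_upwards [hqt, hGt] with t h1 h2
    exact (ENNReal.tendsto_ofReal (h2.sub h1)).liminf_eq.ge
  rcases lt_or_ge (∫ t, (G₀ t - q₀ t) ∂μ - δ) 0 with hneg | hnonneg
  · refine .of_forall fun n => ?_
    rw [integral_sub hG₀ hq₀] at hneg
    have := integral_mono_ae (hq n) (hG n) (hqG n)
    linarith [hint n]
  · have hlt : ENNReal.ofReal (∫ t, (G₀ t - q₀ t) ∂μ - δ) <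
        liminf (fun n => ENNReal.ofReal (∫ t, (G n t - q n t) ∂μ)) atTop :=
      lt_of_lt_of_le ((ENNReal.ofReal_lt_ofReal_iff_of_nonneg hnonneg).2 (by linarith)) fatou
    filter_upwards [eventually_lt_of_lt_liminf hlt] with n hn
    rw [ENNReal.ofReal_lt_ofReal_iff_of_nonneg hnonneg, integral_sub hG₀ hq₀,
      integral_sub (hG n) (hq n)] at hn
    linarith [hint n]

end Integrals

section StaticProduct

variable {Y : Type*} [PseudoMetricSpace Y]

/-- The length element of the curve `(A, B)` in the product with metric `-H² dt² + L² d²`. -/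
noncomputable def staticIntegrand (H L : ℝ) (A : ℝ → ℝ) (B : ℝ → Y) (t : ℝ) : ℝ :=
  √((H * |deriv A t|) ^ 2 - (L * mSpeed dist B t) ^ 2)

/-- The length of the straight segment joining two points of `(A, B)` at parameter distance `ε`. -/
noncomputable def chordLength (H L : ℝ) (A : ℝ → ℝ) (B : ℝ → Y) (ε t : ℝ) : ℝ :=
  √((H * |A (t + ε) - A t|) ^ 2 - (L * dist (B (t + ε)) (B t)) ^ 2)

lemma sqrt_sq_sub_sq_le {x : ℝ} (hx : 0 ≤ x) (y : ℝ) : √(x ^ 2 - y ^ 2) ≤ x :=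
  Real.sqrt_le_iff.2 ⟨hx, by linarith [sq_nonneg y]⟩

variable {H L : ℝ} {A : ℝ → ℝ} {B : ℝ → Y} {g k : ℝ → ℝ}

lemma integrable_staticIntegrand (hH : 0 ≤ H) (hA : IsSpeedBound A g) (hB : IsSpeedBound B k) :
    Integrable (staticIntegrand H L A B) := by
  refine (hA.integrable_deriv.abs.const_mul H).mono' ?_ (.of_forall fun t => ?_)
  · have h1 := hA.integrable_deriv.abs.aestronglyMeasurable
    have h2 := hB.mSpeed.integrable.aestronglyMeasurable
    exact Real.continuous_sqrt.comp_aestronglyMeasurable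
      (((h1.const_mul H).pow 2).sub ((h2.const_mul L).pow 2))
  · rw [staticIntegrand, Real.norm_of_nonneg (Real.sqrt_nonneg _)]
    exact sqrt_sq_sub_sq_le (by positivity) _

lemma chordLength_le_window (hH : 0 ≤ H) (hA : IsSpeedBound A g) {ε : ℝ} (hε : 0 ≤ ε) (t : ℝ) :
    chordLength H L A B ε t ≤ ∫ r in t..(t + ε), H * |deriv A r| := by
  refine (sqrt_sq_sub_sq_le (by positivity) _).trans ?_
  rw [intervalIntegral.integral_const_mul, ← hA.integral_deriv]
  gcongr
  exact intervalIntegral.abs_integral_le_integral_abs (by linarith)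

lemma continuous_chordLength (hA : IsSpeedBound A g) (hB : IsSpeedBound B k) (ε : ℝ) :
    Continuous (chordLength H L A B ε) := by
  have := hA.continuous
  have := hB.continuous
  unfold chordLength
  fun_prop

lemma integrable_chordLength (hH : 0 ≤ H) (hA : IsSpeedBound A g) (hB : IsSpeedBound B k)
    {ε : ℝ} (hε : 0 ≤ ε) : Integrable (chordLength H L A B ε) := by
  refine (integrable_integral_window (hA.integrable_deriv.abs.const_mul H) hε).mono'
    (continuous_chordLength hA hB ε).aestronglyMeasurable (.of_forall fun t => ?_)
  rw [chordLength, Real.norm_of_nonneg (Real.sqrt_nonneg _)]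
  exact chordLength_le_window hH hA hε t

lemma window_staticIntegrand_le_chordLength (hL : 0 ≤ L) (hA : IsSpeedBound A g)
    (hB : IsSpeedBound B k)
    (hcone : ∀ᵐ t, L * mSpeed dist B t ≤ H * |deriv A t|)
    (hmono : ∀ t u, t ≤ u → ∫ r in t..u, |deriv A r| = |A u - A t|) {ε : ℝ} (hε : 0 ≤ ε)
    (t : ℝ) : ∫ r in t..(t + ε), staticIntegrand H L A B r ≤ chordLength H L A B ε t := by
  have hle : t ≤ t + ε := by linarith
  rw [chordLength, ← hmono t (t + ε) hle, intervalIntegral.integral_of_le hle,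
    intervalIntegral.integral_of_le hle]
  refine (integral_sqrt_sq_sub_sq_le (hA.integrable_deriv.abs.const_mul H).restrict
    (hB.mSpeed.integrable.const_mul L).restrict
    (.of_forall fun r => mul_nonneg hL (hB.mSpeed.nonneg r)) (ae_restrict_of_ae hcone)).trans ?_
  rw [integral_const_mul, integral_const_mul]
  refine Real.sqrt_le_sqrt (sub_le_sub_left ?_ _)
  gcongr
  rw [dist_comm, ← intervalIntegral.integral_of_le hle]
  exact hB.mSpeed.dist_le _ _ hle

lemma integral_staticIntegrand_le_integral_chordLength (hH : 0 ≤ H) (hL : 0 ≤ L)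
    (hA : IsSpeedBound A g) (hB : IsSpeedBound B k)
    (hcone : ∀ᵐ t, L * mSpeed dist B t ≤ H * |deriv A t|)
    (hmono : ∀ t u, t ≤ u → ∫ r in t..u, |deriv A r| = |A u - A t|) {ε : ℝ} (hε : 0 ≤ ε) :
    ε * ∫ t, staticIntegrand H L A B t ≤ ∫ t, chordLength H L A B ε t := by
  rw [← integral_integral_window (integrable_staticIntegrand hH hA hB) hε]
  exact integral_mono (integrable_integral_window (integrable_staticIntegrand hH hA hB) hε)
    (integrable_chordLength hH hA hB hε)
    (window_staticIntegrand_le_chordLength hL hA hB hcone hmono hε)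

lemma exists_integral_chordLength_le (hH : 0 ≤ H) (hA : IsSpeedBound A g) (hB : IsSpeedBound B k)
    {δ : ℝ} (hδ : 0 < δ) :
    ∃ ε > 0, ∫ t, chordLength H L A B ε t ≤ ε * ((∫ t, staticIntegrand H L A B t) + δ) := by
  let ε : ℕ → ℝ := fun n => 1 / ((n : ℝ) + 1)
  have hε : ∀ n, 0 < ε n := fun n => Nat.one_div_pos_of_nat
  have hεt : Tendsto ε atTop (𝓝[≠] 0) :=
    tendsto_nhdsWithin_iff.2 ⟨tendsto_one_div_add_atTop_nhds_zero_nat, .of_forall fun n => (hε n).ne'⟩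
  have hHA : Integrable fun t => H * |deriv A t| := hA.integrable_deriv.abs.const_mul H
  have key := eventually_integral_le_of_tendsto_ae (μ := volume)
    (q := fun n t => chordLength H L A B (ε n) t / ε n)
    (G := fun n t => (∫ r in t..(t + ε n), H * |deriv A r|) / ε n)
    (q₀ := staticIntegrand H L A B) (G₀ := fun t => H * |deriv A t|)
    (fun n => (integrable_chordLength hH hA hB (hε n).le).div_const _)
    (fun n => (integrable_integral_window hHA (hε n).le).div_const _)
    (integrable_staticIntegrand hH hA hB) hHA
    (fun n => .of_forall fun t =>
      div_le_div_of_nonneg_right (chordLength_le_window hH hA (hε n).le t) (hε n).le)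
    (fun n => by
      rw [integral_div, integral_integral_window hHA (hε n).le, mul_div_cancel_left₀ _ (hε n).ne'])
    ?_ ?_ hδ
  · obtain ⟨n, hn⟩ := key.exists
    refine ⟨ε n, hε n, ?_⟩
    rwa [integral_div, div_le_iff₀' (hε n)] at hn
  · filter_upwards [hA.ae_tendsto_abs_slope, hB.ae_tendsto_mSpeed] with t h1 h2
    have h3 := ((((h1.const_mul H).pow 2).sub ((h2.const_mul L).pow 2)).sqrt).comp hεt
    refine h3.congr fun n => ?_
    simp only [Function.comp, chordLength, abs_of_pos (hε n)]
    rw [← Real.sqrt_sq (hε n).le, ← Real.sqrt_div' _ (sq_nonneg _), Real.sqrt_sq (hε n).le]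
    congr 1
    ring
  · filter_upwards [ae_tendsto_average hHA] with t ht using ht.comp hεt

/-- Upper semicontinuity of the length in a static product, for curves on the whole line. -/
theorem eventually_integral_staticIntegrand_le (hH : 0 ≤ H) (hL : 0 ≤ L)
    (hA : IsSpeedBound A g) (hB : IsSpeedBound B k)
    {An : ℕ → ℝ → ℝ} {Bn : ℕ → ℝ → Y} {gn kn : ℕ → ℝ → ℝ}
    (hAn : ∀ n, IsSpeedBound (An n) (gn n)) (hBn : ∀ n, IsSpeedBound (Bn n) (kn n))
    (hcone : ∀ᶠ n in atTop, ∀ᵐ t, L * mSpeed dist (Bn n) t ≤ H * |deriv (An n) t|)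
    (hmono : ∀ n t u, t ≤ u → ∫ r in t..u, |deriv (An n) r| = |An n u - An n t|)
    (hAt : ∀ t, Tendsto (fun n => An n t) atTop (𝓝 (A t)))
    (hBt : ∀ t, Tendsto (fun n => Bn n t) atTop (𝓝 (B t)))
    {u v C : ℝ} (hleft : ∀ n t, t ≤ u → An n t = An n u)
    (hright : ∀ n t, v ≤ t → An n t = An n v)
    (hbdd : ∀ᶠ n in atTop, ∀ t t', |An n t - An n t'| ≤ C) {δ : ℝ} (hδ : 0 < δ) :
    ∀ᶠ n in atTop, ∫ t, staticIntegrand H L (An n) (Bn n) t ≤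
      (∫ t, staticIntegrand H L A B t) + δ := by
  obtain ⟨ε, hε, hchord⟩ := exists_integral_chordLength_le (L := L) hH hA hB (half_pos hδ)
  have hlim : Tendsto (fun n => ∫ t, chordLength H L (An n) (Bn n) ε t) atTop
      (𝓝 (∫ t, chordLength H L A B ε t)) := by
    refine tendsto_integral_filter_of_dominated_convergence
      ((Icc (u - ε) v).indicator fun _ => H * C)
      (.of_forall fun n => (continuous_chordLength (hAn n) (hBn n) ε).aestronglyMeasurable) ?_
      ((integrable_indicator_iff measurableSet_Icc).2 (integrableOn_const (by simp)))
      (.of_forall fun t => ?_)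
    · filter_upwards [hbdd] with n hn
      refine .of_forall fun t => ?_
      rw [chordLength, Real.norm_of_nonneg (Real.sqrt_nonneg _)]
      refine (sqrt_sq_sub_sq_le (by positivity) _).trans ?_
      by_cases ht : t ∈ Icc (u - ε) v
      · rw [indicator_of_mem ht]
        gcongr
        exact hn _ _
      · rw [indicator_of_notMem ht]
        rcases not_and_or.1 ht with h | h
        · rw [hleft n t (by linarith), hleft n (t + ε) (by linarith)]
          simp
        · rw [hright n t (by linarith), hright n (t + ε) (by linarith)]
          simp
    · exact ((((((hAt _).sub (hAt _)).abs).const_mul H).pow 2).sub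
        ((((hBt _).dist (hBt _)).const_mul L).pow 2)).sqrt
  have hδε : 0 < ε * (δ / 2) := by positivity
  filter_upwards [hlim.eventually_le_const (lt_add_of_pos_right _ hδε), hcone] with n hn hc
  have h1 := integral_staticIntegrand_le_integral_chordLength hH hL (hAn n) (hBn n) hc (hmono n)
    hε.le
  refine le_of_mul_le_mul_left ?_ hε
  linarith

end StaticProduct

section Clamp

/-- The curve `β` restricted to `[u, v]` and extended by constants. -/
def clampCurve {Y : Type*} (β : ℝ → Y) (u v t : ℝ) : Y := β (max u (min t v))

variable {Y : Type*} {u v : ℝ}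

lemma clampCurve_of_mem (β : ℝ → Y) {t : ℝ} (ht : t ∈ Icc u v) : clampCurve β u v t = β t := by
  rw [clampCurve, min_eq_left ht.2, max_eq_right ht.1]

lemma clampCurve_of_le (β : ℝ → Y) {t : ℝ} (ht : t ≤ u) : clampCurve β u v t = β u := by
  rw [clampCurve, max_eq_left ((min_le_left _ _).trans ht)]

lemma clampCurve_of_ge (β : ℝ → Y) (huv : u ≤ v) {t : ℝ} (ht : v ≤ t) :
    clampCurve β u v t = β v := by
  rw [clampCurve, min_eq_right ht, max_eq_right huv]

lemma clampCurve_eventuallyEq (β : ℝ → Y) {t : ℝ} (ht : t ∈ Ioo u v) :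
    clampCurve β u v =ᶠ[𝓝 t] β := by
  filter_upwards [Ioo_mem_nhds ht.1 ht.2] with r hr
  exact clampCurve_of_mem β (Ioo_subset_Icc_self hr)

lemma clampCurve_eventually_const (β : ℝ → Y) (huv : u ≤ v) {t : ℝ} (ht : t ∉ Icc u v) :
    clampCurve β u v =ᶠ[𝓝 t] fun _ => clampCurve β u v t := by
  rcases not_and_or.1 ht with h | h
  · rw [clampCurve_of_le β (not_le.1 h).le]
    filter_upwards [Iio_mem_nhds (not_le.1 h)] with r hr using clampCurve_of_le β (le_of_lt hr)
  · rw [clampCurve_of_ge β huv (not_le.1 h).le]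
    filter_upwards [Ioi_mem_nhds (not_le.1 h)] with r hr using clampCurve_of_ge β huv (le_of_lt hr)

lemma tendsto_add_punctured (t : ℝ) : Tendsto (fun e => t + e) (𝓝[≠] 0) (𝓝 t) := by
  have : Tendsto (fun e => t + e) (𝓝 0) (𝓝 (t + 0)) := (continuous_const_add t).tendsto 0
  rw [add_zero] at this
  exact this.mono_left nhdsWithin_le_nhds

lemma mSpeed_congr {dst : Y → Y → ℝ} {β β' : ℝ → Y} {t : ℝ} (h : β =ᶠ[𝓝 t] β') :
    mSpeed dst β t = mSpeed dst β' t := by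
  refine limsup_congr ?_
  filter_upwards [(tendsto_add_punctured t).eventually h] with e he
  rw [he, h.self_of_nhds]

lemma mSpeed_const {dst : Y → Y → ℝ} (hdst : ∀ y, dst y y = 0) (y : Y) (t : ℝ) :
    mSpeed dst (fun _ => y) t = 0 := by
  simp [mSpeed, hdst]

lemma ae_notMem_boundary (u v : ℝ) : ∀ᵐ t : ℝ, t ≠ u ∧ t ≠ v := by
  simp only [eventually_and]
  constructor <;> simp [ae_iff, measure_singleton]

lemma _root_.ACOn.mono {dst : Y → Y → ℝ} {β : ℝ → Y} {a b : ℝ} (h : ACOn dst β a b) (hau : a ≤ u)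
    (hvb : v ≤ b) : ACOn dst β u v := by
  obtain ⟨g, hg, hd⟩ := h
  have hsub : Icc u v ⊆ Icc a b := Icc_subset_Icc hau hvb
  exact ⟨g, hg.mono_set hsub, fun t w ht hw htw => hd (hsub ht) (hsub hw) htw⟩

variable [PseudoMetricSpace Y]

lemma _root_.ACOn.exists_isSpeedBound {β : ℝ → Y} (huv : u ≤ v) (h : ACOn dist β u v) :
    ∃ g, IsSpeedBound (clampCurve β u v) g := by
  obtain ⟨g, hg, hd⟩ := h
  have hgI : Integrable ((Icc u v).indicator fun t => |g t|) :=
    (integrable_indicator_iff measurableSet_Icc).2 hg.abs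
  refine ⟨(Icc u v).indicator fun t => |g t|, hgI,
    fun t => indicator_nonneg (fun _ _ => abs_nonneg _) t, fun t w htw => ?_⟩
  have hmem : ∀ r, max u (min r v) ∈ Icc u v := fun r =>
    ⟨le_max_left _ _, max_le huv (min_le_right _ _)⟩
  have hle : max u (min t v) ≤ max u (min w v) := max_le_max_left _ (min_le_min_right _ htw)
  refine (hd (hmem t) (hmem w) hle).trans ?_
  refine (le_abs_self _).trans ((intervalIntegral.abs_integral_le_integral_abs hle).trans ?_)
  rw [intervalIntegral.integral_of_le hle, intervalIntegral.integral_of_le htw]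
  have hsub : Ioc (max u (min t v)) (max u (min w v)) ⊆ Ioc t w := by
    intro r hr
    have h1 := (max_lt_iff.1 hr.1)
    have h2 : r ≤ min w v := (le_max_iff.1 hr.2).resolve_left (not_le.2 h1.1)
    exact ⟨(min_lt_iff.1 h1.2).resolve_right (not_lt.2 (h2.trans (min_le_right _ _))),
      h2.trans (min_le_left _ _)⟩
  have heq : ∫ r in Ioc (max u (min t v)) (max u (min w v)), |g r| =
      ∫ r in Ioc (max u (min t v)) (max u (min w v)), (Icc u v).indicator (fun t => |g t|) r := by
    refine setIntegral_congr_fun measurableSet_Ioc fun r hr => ?_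
    have : r ∈ Icc u v := ⟨(hmem t).1.trans hr.1.le, hr.2.trans (hmem w).2⟩
    simp [this]
  rw [heq]
  exact setIntegral_mono_set hgI.integrableOn
    (.of_forall fun r => indicator_nonneg (fun _ _ => abs_nonneg _) r) hsub.eventuallyLE

lemma mSpeed_clampCurve (β : ℝ → Y) {t : ℝ} (ht : t ∈ Ioo u v) :
    mSpeed dist (clampCurve β u v) t = mSpeed dist β t :=
  mSpeed_congr (clampCurve_eventuallyEq β ht)

lemma _root_.ACOn.continuousOn {β : ℝ → Y} (huv : u ≤ v) (h : ACOn dist β u v) :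
    ContinuousOn β (Icc u v) := by
  obtain ⟨g, hg⟩ := h.exists_isSpeedBound huv
  exact hg.continuous.continuousOn.congr fun t ht => (clampCurve_of_mem β ht).symm

lemma _root_.ACOn.ae_tendsto_mSpeed {β : ℝ → Y} (huv : u ≤ v) (h : ACOn dist β u v) :
    ∀ᵐ t, t ∈ Ioo u v → Tendsto (fun e => dist (β (t + e)) (β t) / |e|) (𝓝[≠] 0)
      (𝓝 (mSpeed dist β t)) := by
  obtain ⟨g, hg⟩ := h.exists_isSpeedBound huv
  filter_upwards [hg.ae_tendsto_mSpeed] with t ht htI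
  rw [mSpeed_clampCurve β htI] at ht
  refine ht.congr' ?_
  filter_upwards [(tendsto_add_punctured t).eventually (clampCurve_eventuallyEq β htI)] with e he
  rw [he, (clampCurve_eventuallyEq β htI).self_of_nhds]

lemma _root_.ACOn.integrableOn_mSpeed {β : ℝ → Y} (huv : u ≤ v) (h : ACOn dist β u v) :
    IntegrableOn (mSpeed dist β) (Ioo u v) := by
  obtain ⟨g, hg⟩ := h.exists_isSpeedBound huv
  exact hg.mSpeed.integrable.integrableOn.congr_fun (fun t ht => mSpeed_clampCurve β ht)
    measurableSet_Ioo

lemma _root_.ACOn.ae_tendsto_average_mSpeed {β : ℝ → Y} (huv : u ≤ v) (h : ACOn dist β u v) :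
    ∀ᵐ t, t ∈ Ioo u v → Tendsto (fun e => (∫ r in t..(t + e), mSpeed dist β r) / e) (𝓝[≠] 0)
      (𝓝 (mSpeed dist β t)) := by
  have hI : Integrable ((Ioo u v).indicator (mSpeed dist β)) :=
    (integrable_indicator_iff measurableSet_Ioo).2 (h.integrableOn_mSpeed huv)
  filter_upwards [ae_tendsto_average hI] with t ht htI
  rw [indicator_of_mem htI] at ht
  refine ht.congr' ?_
  filter_upwards [(tendsto_add_punctured t).eventually (Ioo_mem_nhds htI.1 htI.2)] with e he
  congr 1
  refine intervalIntegral.integral_congr fun r hr => ?_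
  exact indicator_of_mem (Set.OrdConnected.uIcc_subset ordConnected_Ioo htI he hr) _

section Real

variable {A : ℝ → ℝ}

lemma _root_.ACOn.integrableOn_deriv (huv : u ≤ v) (h : ACOn dist A u v) :
    IntegrableOn (deriv A) (Ioo u v) := by
  obtain ⟨g, hg⟩ := h.exists_isSpeedBound huv
  exact hg.integrable_deriv.integrableOn.congr_fun
    (fun t ht => (clampCurve_eventuallyEq A ht).deriv_eq) measurableSet_Ioo

lemma ae_deriv_clampCurve (huv : u ≤ v) {P : ℝ → Prop} (hP0 : P 0)
    (h : ∀ᵐ t, t ∈ Ioo u v → P (deriv A t)) : ∀ᵐ t, P (deriv (clampCurve A u v) t) := by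
  filter_upwards [h, ae_notMem_boundary u v] with t ht hb
  by_cases htI : t ∈ Icc u v
  · have htI' : t ∈ Ioo u v := ⟨lt_of_le_of_ne htI.1 hb.1.symm, lt_of_le_of_ne htI.2 hb.2⟩
    rw [(clampCurve_eventuallyEq A htI').deriv_eq]
    exact ht htI'
  · rw [(clampCurve_eventually_const A huv htI).deriv_eq, deriv_const]
    exact hP0

lemma integral_abs_deriv_clampCurve (huv : u ≤ v) (h : ACOn dist A u v)
    (hdir : FutureDirected A u v ∨ PastDirected A u v) {t w : ℝ} (htw : t ≤ w) :
    ∫ r in t..w, |deriv (clampCurve A u v) r| = |clampCurve A u v w - clampCurve A u v t| := by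
  obtain ⟨g, hg⟩ := h.exists_isSpeedBound huv
  rw [← hg.integral_deriv t w]
  rcases hdir with hdir | hdir
  · have h0 := ae_deriv_clampCurve huv (P := fun x => 0 ≤ x) le_rfl
      (hdir.mono fun t ht htI => (ht htI).le)
    rw [abs_of_nonneg (intervalIntegral.integral_nonneg_of_ae htw h0)]
    exact intervalIntegral.integral_congr_ae (h0.mono fun r hr _ => abs_of_nonneg hr)
  · have h0 := ae_deriv_clampCurve huv (P := fun x => 0 ≤ -x) (by simp)
      (hdir.mono fun t ht htI => (neg_pos.2 (ht htI)).le)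
    rw [← abs_neg, ← intervalIntegral.integral_neg,
      abs_of_nonneg (intervalIntegral.integral_nonneg_of_ae htw h0)]
    exact intervalIntegral.integral_congr_ae
      (h0.mono fun r hr _ => abs_of_nonpos (neg_nonneg.1 hr))

lemma abs_clampCurve_sub_le (huv : u ≤ v) (h : ACOn dist A u v)
    (hdir : FutureDirected A u v ∨ PastDirected A u v) (t w : ℝ) :
    |clampCurve A u v w - clampCurve A u v t| ≤ |A v - A u| := by
  obtain ⟨g, hg⟩ := h.exists_isSpeedBound huv
  wlog htw : t ≤ w generalizing t w
  · rw [abs_sub_comm]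
    exact this w t (le_of_not_ge htw)
  have hmin : min t u ≤ max w v := (min_le_right _ _).trans (huv.trans (le_max_right _ _))
  rw [← integral_abs_deriv_clampCurve huv h hdir htw,
    ← clampCurve_of_le (v := v) A (min_le_right t u),
    ← clampCurve_of_ge (u := u) A huv (le_max_right w v),
    ← integral_abs_deriv_clampCurve huv h hdir hmin]
  exact intervalIntegral.integral_mono_interval (min_le_left _ _) htw (le_max_left _ _)
    (.of_forall fun r => abs_nonneg _) hg.integrable_deriv.abs.intervalIntegrable

end Real

lemma integral_staticIntegrand_clampCurve {H L : ℝ} (huv : u ≤ v) (A : ℝ → ℝ) (B : ℝ → Y) :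
    ∫ t, staticIntegrand H L (clampCurve A u v) (clampCurve B u v) t =
      ∫ t in u..v, staticIntegrand H L A B t := by
  rw [intervalIntegral.integral_of_le huv, integral_Ioc_eq_integral_Ioo,
    ← integral_indicator measurableSet_Ioo]
  refine integral_congr_ae ?_
  filter_upwards [ae_notMem_boundary u v] with t hb
  by_cases htI : t ∈ Icc u v
  · have htI' : t ∈ Ioo u v := ⟨lt_of_le_of_ne htI.1 hb.1.symm, lt_of_le_of_ne htI.2 hb.2⟩
    rw [indicator_of_mem htI', staticIntegrand, staticIntegrand, mSpeed_clampCurve B htI',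
      (clampCurve_eventuallyEq A htI').deriv_eq]
  · rw [indicator_of_notMem fun h => htI (Ioo_subset_Icc_self h), staticIntegrand,
      (clampCurve_eventually_const A huv htI).deriv_eq,
      mSpeed_congr (clampCurve_eventually_const B huv htI), mSpeed_const dist_self]
    simp

lemma integrableOn_staticIntegrand {H L : ℝ} (hH : 0 ≤ H) (huv : u ≤ v) {A : ℝ → ℝ} {B : ℝ → Y}
    (hA : ACOn dist A u v) (hB : ACOn dist B u v) :
    IntegrableOn (staticIntegrand H L A B) (Ioo u v) := by
  obtain ⟨g, hg⟩ := hA.exists_isSpeedBound huv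
  obtain ⟨k, hk⟩ := hB.exists_isSpeedBound huv
  refine (integrable_staticIntegrand (L := L) hH hg hk).integrableOn.congr_fun (fun t ht => ?_)
    measurableSet_Ioo
  rw [staticIntegrand, staticIntegrand, mSpeed_clampCurve B ht,
    (clampCurve_eventuallyEq A ht).deriv_eq]

/-- Upper semicontinuity of the length in a static product. -/
theorem eventually_intervalIntegral_staticIntegrand_le {H L : ℝ} (hH : 0 ≤ H) (hL : 0 ≤ L)
    (huv : u ≤ v) {A : ℝ → ℝ} {B : ℝ → Y} {An : ℕ → ℝ → ℝ} {Bn : ℕ → ℝ → Y}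
    (hA : ACOn dist A u v) (hB : ACOn dist B u v)
    (hAn : ∀ n, ACOn dist (An n) u v) (hBn : ∀ n, ACOn dist (Bn n) u v)
    (hdir : ∀ n, FutureDirected (An n) u v ∨ PastDirected (An n) u v)
    (hcone : ∀ᶠ n in atTop, ∀ᵐ t, t ∈ Ioo u v →
      L * mSpeed dist (Bn n) t ≤ H * |deriv (An n) t|)
    (hAt : ∀ t ∈ Icc u v, Tendsto (fun n => An n t) atTop (𝓝 (A t)))
    (hBt : ∀ t ∈ Icc u v, Tendsto (fun n => Bn n t) atTop (𝓝 (B t))) {δ : ℝ} (hδ : 0 < δ) :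
    ∀ᶠ n in atTop, ∫ t in u..v, staticIntegrand H L (An n) (Bn n) t ≤
      (∫ t in u..v, staticIntegrand H L A B t) + δ := by
  obtain ⟨g, hg⟩ := hA.exists_isSpeedBound huv
  obtain ⟨k, hk⟩ := hB.exists_isSpeedBound huv
  choose gn hgn using fun n => (hAn n).exists_isSpeedBound huv
  choose kn hkn using fun n => (hBn n).exists_isSpeedBound huv
  have hmem : ∀ t, max u (min t v) ∈ Icc u v := fun t =>
    ⟨le_max_left _ _, max_le huv (min_le_right _ _)⟩
  simp_rw [← integral_staticIntegrand_clampCurve huv]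
  refine eventually_integral_staticIntegrand_le hH hL hg hk hgn hkn ?_
    (fun n t w htw => integral_abs_deriv_clampCurve huv (hAn n) (hdir n) htw)
    (fun t => hAt _ (hmem t)) (fun t => hBt _ (hmem t)) (u := u) (v := v) (C := |A v - A u| + 1)
    (fun n t ht => by rw [clampCurve_of_le _ ht, clampCurve_of_le _ le_rfl])
    (fun n t ht => by rw [clampCurve_of_ge _ huv ht, clampCurve_of_ge _ huv le_rfl]) ?_ hδ
  · filter_upwards [hcone] with n hn
    filter_upwards [hn, ae_notMem_boundary u v] with t ht hb
    by_cases htI : t ∈ Icc u v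
    · have htI' : t ∈ Ioo u v := ⟨lt_of_le_of_ne htI.1 hb.1.symm, lt_of_le_of_ne htI.2 hb.2⟩
      rw [mSpeed_clampCurve _ htI', (clampCurve_eventuallyEq _ htI').deriv_eq]
      exact ht htI'
    · rw [mSpeed_congr (clampCurve_eventually_const _ huv htI), mSpeed_const dist_self, mul_zero]
      positivity
  · have hlim := ((hAt v (right_mem_Icc.2 huv)).sub (hAt u (left_mem_Icc.2 huv))).abs
    filter_upwards [hlim.eventually_le_const (lt_add_one _)] with n hn t t'
    exact (abs_clampCurve_sub_le huv (hAn n) (hdir n) t' t).trans hn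

end Clamp

section MetricFamily

variable {X : Type*}

/-- `dst` is a pseudo-distance. -/
structure IsPseudoDist (dst : X → X → ℝ) : Prop where
  self : ∀ x, dst x x = 0
  comm : ∀ x y, dst x y = dst y x
  triangle : ∀ x y z, dst x z ≤ dst x y + dst y z

/-- The pseudo-metric space with distance `dst`. -/
@[reducible]
def IsPseudoDist.toPseudoMetricSpace {dst : X → X → ℝ} (h : IsPseudoDist dst) :
    PseudoMetricSpace X where
  dist := dst
  dist_self := h.self
  dist_comm := h.comm
  dist_triangle := h.triangle

lemma IsPseudoDist.nonneg {dst : X → X → ℝ} (h : IsPseudoDist dst) (x y : X) : 0 ≤ dst x y :=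
  @dist_nonneg X h.toPseudoMetricSpace x y

variable {β : ℝ → X} {u v : ℝ} {dst dst' : X → X → ℝ}

lemma IsPseudoDist.ae_tendsto_mSpeed (h : IsPseudoDist dst) (huv : u ≤ v) (hβ : ACOn dst β u v) :
    ∀ᵐ t, t ∈ Ioo u v → Tendsto (fun e => dst (β (t + e)) (β t) / |e|) (𝓝[≠] 0)
      (𝓝 (mSpeed dst β t)) :=
  @ACOn.ae_tendsto_mSpeed X u v h.toPseudoMetricSpace β huv hβ

lemma IsPseudoDist.integrableOn_mSpeed (h : IsPseudoDist dst) (huv : u ≤ v)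
    (hβ : ACOn dst β u v) : IntegrableOn (mSpeed dst β) (Ioo u v) :=
  @ACOn.integrableOn_mSpeed X u v h.toPseudoMetricSpace β huv hβ

lemma IsPseudoDist.ae_tendsto_average_mSpeed (h : IsPseudoDist dst) (huv : u ≤ v)
    (hβ : ACOn dst β u v) :
    ∀ᵐ t, t ∈ Ioo u v → Tendsto (fun e => (∫ r in t..(t + e), mSpeed dst β r) / e) (𝓝[≠] 0)
      (𝓝 (mSpeed dst β t)) :=
  @ACOn.ae_tendsto_average_mSpeed X u v h.toPseudoMetricSpace β huv hβ

lemma IsPseudoDist.tendsto_dst (h : IsPseudoDist dst) (huv : u ≤ v) (hβ : ACOn dst β u v) {t : ℝ}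
    (ht : t ∈ Icc u v) : Tendsto (fun r => dst (β r) (β t)) (𝓝[Icc u v] t) (𝓝 0) := by
  let _ := h.toPseudoMetricSpace
  exact tendsto_iff_dist_tendsto_zero.1 ((ACOn.continuousOn (Y := X) huv hβ) t ht)

lemma IsPseudoDist.intervalIntegrable_static (h : IsPseudoDist dst) {H L : ℝ} (hH : 0 ≤ H)
    (huv : u ≤ v) {A : ℝ → ℝ} (hA : ACOn rdist A u v) (hβ : ACOn dst β u v) :
    IntervalIntegrable (fun t => √((H * |deriv A t|) ^ 2 - (L * mSpeed dst β t) ^ 2))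
      volume u v := by
  rw [intervalIntegrable_iff_integrableOn_Ioo_of_le huv]
  exact @integrableOn_staticIntegrand X u v h.toPseudoMetricSpace H L hH huv A β hA hβ

lemma IsPseudoDist.eventually_integral_static_le (h : IsPseudoDist dst) {H L : ℝ} (hH : 0 ≤ H)
    (hL : 0 ≤ L) (huv : u ≤ v) {A : ℝ → ℝ} {B : ℝ → X} {An : ℕ → ℝ → ℝ} {Bn : ℕ → ℝ → X}
    (hA : ACOn rdist A u v) (hB : ACOn dst B u v)
    (hAn : ∀ n, ACOn rdist (An n) u v) (hBn : ∀ n, ACOn dst (Bn n) u v)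
    (hdir : ∀ n, FutureDirected (An n) u v ∨ PastDirected (An n) u v)
    (hcone : ∀ᶠ n in atTop, ∀ᵐ t, t ∈ Ioo u v →
      L * mSpeed dst (Bn n) t ≤ H * |deriv (An n) t|)
    (hAt : ∀ t ∈ Icc u v, Tendsto (fun n => An n t) atTop (𝓝 (A t)))
    (hBt : ∀ t ∈ Icc u v, Tendsto (fun n => dst (Bn n t) (B t)) atTop (𝓝 0)) {δ : ℝ}
    (hδ : 0 < δ) :
    ∀ᶠ n in atTop, ∫ t in u..v, √((H * |deriv (An n) t|) ^ 2 - (L * mSpeed dst (Bn n) t) ^ 2) ≤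
      (∫ t in u..v, √((H * |deriv A t|) ^ 2 - (L * mSpeed dst B t) ^ 2)) + δ := by
  let _ := h.toPseudoMetricSpace
  exact eventually_intervalIntegral_staticIntegrand_le (Y := X) hH hL huv hA hB hAn hBn hdir hcone
    hAt (fun t ht => tendsto_iff_dist_tendsto_zero.2 (hBt t ht)) hδ

lemma ae_mSpeed_le_mul (h : IsPseudoDist dst) (h' : IsPseudoDist dst') (huv : u ≤ v)
    (hβ : ACOn dst β u v) (hβ' : ACOn dst' β u v) {K : Set X} (hK : ∀ t ∈ Ioo u v, β t ∈ K)
    {r C : ℝ} (hr : 0 < r)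
    (hle : ∀ x ∈ K, ∀ y ∈ K, dst x y < r → dst x y ≤ C * dst' x y) :
    ∀ᵐ t, t ∈ Ioo u v → mSpeed dst β t ≤ C * mSpeed dst' β t := by
  filter_upwards [h.ae_tendsto_mSpeed huv hβ, h'.ae_tendsto_mSpeed huv hβ'] with t ht ht' htI
  refine le_of_tendsto_of_tendsto (ht htI) ((ht' htI).const_mul C) ?_
  have hnhds : 𝓝[Icc u v] t = 𝓝 t := nhdsWithin_eq_nhds.2 (Icc_mem_nhds htI.1 htI.2)
  have hlim := h.tendsto_dst huv hβ (Ioo_subset_Icc_self htI)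
  rw [hnhds] at hlim
  filter_upwards [(tendsto_add_punctured t).eventually (Ioo_mem_nhds htI.1 htI.2),
    (tendsto_add_punctured t).eventually (hlim.eventually_lt_const hr)] with e he her
  rw [← mul_div_assoc]
  gcongr
  exact hle _ (hK _ he) _ (hK _ htI) her

lemma eventually_average_le_average {f g : ℝ → ℝ} (hf : IntegrableOn f (Ioo u v))
    (hg : IntegrableOn g (Ioo u v)) (hfg : ∀ᵐ t, t ∈ Ioo u v → f t ≤ g t) {t : ℝ}
    (ht : t ∈ Ioo u v) :
    ∀ᶠ e in 𝓝[≠] 0, (∫ r in t..(t + e), f r) / e ≤ (∫ r in t..(t + e), g r) / e := by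
  filter_upwards [(tendsto_add_punctured t).eventually (Ioo_mem_nhds ht.1 ht.2),
    self_mem_nhdsWithin] with e he hne
  have hsub : uIcc t (t + e) ⊆ Ioo u v := ordConnected_Ioo.uIcc_subset ht he
  have hfi : IntervalIntegrable f volume t (t + e) :=
    (hf.mono_set hsub).intervalIntegrable
  have hgi : IntervalIntegrable g volume t (t + e) :=
    (hg.mono_set hsub).intervalIntegrable
  rcases lt_or_gt_of_ne hne with h0 | h0
  · have hle : t + e ≤ t := by linarith
    rw [div_le_div_right_of_neg h0, intervalIntegral.integral_symm (t + e) t,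
      intervalIntegral.integral_symm (t + e) t, neg_le_neg_iff]
    refine intervalIntegral.integral_mono_ae_restrict hle hfi.symm hgi.symm ?_
    filter_upwards [ae_restrict_of_ae hfg, ae_restrict_mem measurableSet_Icc] with r hr hrI
    exact hr (hsub (Icc_subset_uIcc' hrI))
  · have hle : t ≤ t + e := by linarith
    refine div_le_div_of_nonneg_right ?_ h0.le
    refine intervalIntegral.integral_mono_ae_restrict hle hfi hgi ?_
    filter_upwards [ae_restrict_of_ae hfg, ae_restrict_mem measurableSet_Icc] with r hr hrI
    exact hr (hsub (Icc_subset_uIcc hrI))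

variable {d : ℝ → X → X → ℝ} {J : Set ℝ} {K : Set X} {r : ℝ} {ω : ℝ → ℝ}

/-- Nearby points of `K` have `d s`-distances, `s ∈ J`, comparable with log-modulus `ω`. -/
def IsLogModulus (d : ℝ → X → X → ℝ) (J : Set ℝ) (K : Set X) (r : ℝ) (ω : ℝ → ℝ) : Prop :=
  ∀ s ∈ J, ∀ s' ∈ J, ∀ x ∈ K, ∀ y ∈ K, d s x y < r →
    d s x y ≤ Real.exp (ω |s - s'|) * d s' x y

lemma ae_genSpeed_bounds (hJ : ∀ s ∈ J, IsPseudoDist (d s)) (hmod : IsLogModulus d J K r ω)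
    (hr : 0 < r) (huv : u ≤ v) (hβ : ∀ s ∈ J, ACOn (d s) β u v)
    (hK : ∀ t ∈ Ioo u v, β t ∈ K) {s' : ℝ} (hs' : s' ∈ J) :
    ∀ᵐ t, t ∈ Ioo u v → ∀ s ∈ J,
      Real.exp (-ω |s - s'|) * mSpeed (d s') β t ≤ genSpeed d β s t ∧
        genSpeed d β s t ≤ Real.exp (ω |s - s'|) * mSpeed (d s') β t := by
  filter_upwards [(hJ s' hs').ae_tendsto_average_mSpeed huv (hβ s' hs')] with t ht htI s hs
  have hlim := ht htI
  have hi := (hJ s hs).integrableOn_mSpeed huv (hβ s hs)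
  have hi' := (hJ s' hs').integrableOn_mSpeed huv (hβ s' hs')
  have hmul : ∀ C : ℝ, (fun e : ℝ => (∫ w in t..(t + e), C * mSpeed (d s') β w) / e) =
      fun e => C * ((∫ w in t..(t + e), mSpeed (d s') β w) / e) := fun C => by
    funext e
    rw [intervalIntegral.integral_const_mul, mul_div_assoc]
  have hlimC : ∀ C : ℝ, Tendsto (fun e : ℝ => (∫ w in t..(t + e), C * mSpeed (d s') β w) / e)
      (𝓝[≠] 0) (𝓝 (C * mSpeed (d s') β t)) := fun C => by
    rw [hmul]
    exact hlim.const_mul C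
  have hup : ∀ᵐ w, w ∈ Ioo u v →
      mSpeed (d s) β w ≤ Real.exp (ω |s - s'|) * mSpeed (d s') β w :=
    ae_mSpeed_le_mul (hJ s hs) (hJ s' hs') huv (hβ s hs) (hβ s' hs') hK hr
      fun x hx y hy hxy => hmod s hs s' hs' x hx y hy hxy
  have hlow : ∀ᵐ w, w ∈ Ioo u v →
      Real.exp (-ω |s - s'|) * mSpeed (d s') β w ≤ mSpeed (d s) β w := by
    have := ae_mSpeed_le_mul (C := Real.exp (ω |s - s'|)) (hJ s' hs') (hJ s hs) huv (hβ s' hs')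
      (hβ s hs) hK hr fun x hx y hy hxy => by
        rw [abs_sub_comm]
        exact hmod s' hs' s hs x hx y hy hxy
    filter_upwards [this] with w hw hwI
    calc Real.exp (-ω |s - s'|) * mSpeed (d s') β w
        ≤ Real.exp (-ω |s - s'|) * (Real.exp (ω |s - s'|) * mSpeed (d s) β w) := by
          gcongr
          exact hw hwI
      _ = mSpeed (d s) β w := by rw [← mul_assoc, ← Real.exp_add]; simp
  have h1 := eventually_average_le_average hi (hi'.const_mul _) hup htI
  have h2 := eventually_average_le_average (hi'.const_mul _) hi hlow htI
  have hbdd : IsBoundedUnder (· ≤ ·) (𝓝[≠] 0)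
      (fun e : ℝ => (∫ w in t..(t + e), mSpeed (d s) β w) / e) :=
    (hlimC _).isBoundedUnder_le.mono_le h1
  have hbdd' : IsBoundedUnder (· ≥ ·) (𝓝[≠] 0)
      (fun e : ℝ => (∫ w in t..(t + e), mSpeed (d s) β w) / e) :=
    (hlimC _).isBoundedUnder_ge.mono_ge h2
  constructor
  · rw [← (hlimC _).limsup_eq]
    exact limsup_le_limsup h2 (hlimC _).isCoboundedUnder_le hbdd
  · rw [← (hlimC _).limsup_eq]
    exact limsup_le_limsup h1 hbdd'.isCoboundedUnder_le (hlimC _).isBoundedUnder_le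

end MetricFamily

section Curves

variable {X : Type*} {I : Set ℝ} {d : ℝ → X → X → ℝ} {h : ℝ → X → ℝ}
  {α : ℝ → ℝ} {β : ℝ → X} {a b : ℝ}

/-- The integrand of the Lorentzian length. -/
noncomputable def lorIntegrand (d : ℝ → X → X → ℝ) (h : ℝ → X → ℝ) (α : ℝ → ℝ) (β : ℝ → X)
    (t : ℝ) : ℝ :=
  √((h (α t) (β t)) ^ 2 * (deriv α t) ^ 2 - (genSpeed d β (α t) t) ^ 2)

lemma lorLen_nonneg (d : ℝ → X → X → ℝ) (h : ℝ → X → ℝ) (α : ℝ → ℝ) (β : ℝ → X) (hab : a ≤ b) :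
    0 ≤ lorLen d h α β a b :=
  intervalIntegral.integral_nonneg hab fun _ _ => Real.sqrt_nonneg _

lemma _root_.CurveIn.continuousOn_fst (hγ : CurveIn I d α β a b) : ContinuousOn α (Icc a b) :=
  ACOn.continuousOn hγ.1.le hγ.2.1

variable [TopologicalSpace X]

lemma _root_.IsMetricFamily.isPseudoDist (hd : IsMetricFamily I d) {s : ℝ} (hs : s ∈ I) :
    IsPseudoDist (d s) :=
  ⟨(hd s hs).1, (hd s hs).2.2.1, (hd s hs).2.2.2.1⟩

lemma _root_.CondC.exists_isLogModulus (hdC : CondC I d) (hd : IsMetricFamily I d) {J : Set ℝ}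
    {K : Set X} (hJI : J ⊆ I) (hJ : IsCompact J) (hK : IsCompact K) :
    ∃ r > 0, ∃ ω : ℝ → ℝ, ω 0 = 0 ∧ ContinuousAt ω 0 ∧ IsLogModulus d J K r ω := by
  obtain ⟨r, hr, ω, hω0, -, hωc, hω⟩ := hdC J K hJI hJ hK
  refine ⟨r, hr, ω, hω0, hωc, fun s hs s' hs' x hx y hy hxy => ?_⟩
  by_cases hne : x = y
  · subst hne
    rw [(hd s (hJI hs)).1, (hd s' (hJI hs')).1, mul_zero]
  have hbdd : BddBelow ((fun u => d u x y) '' J) :=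
    ⟨0, by rintro _ ⟨w, hw, rfl⟩; exact (hd.isPseudoDist (hJI hw)).nonneg x y⟩
  have hlog := hω s hs s' hs' x hx y hy hne
    ((csInf_le hbdd (mem_image_of_mem _ hs)).trans_lt hxy)
  have h1 := (hd s (hJI hs)).2.1 x y hne
  have h2 := (hd s' (hJI hs')).2.1 x y hne
  have := (Real.log_le_iff_le_exp (div_pos h1 h2)).1 ((le_abs_self _).trans hlog)
  rwa [div_le_iff₀ h2] at this

lemma continuousOn_of_ACOn (hd : IsMetricFamily I d) {s : ℝ} (hs : s ∈ I) (hab : a ≤ b)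
    (hβ : ACOn (d s) β a b) : ContinuousOn β (Icc a b) := by
  intro t ht
  refine ((hd s hs).2.2.2.2 (β t)).tendsto_right_iff.2 fun ε hε => ?_
  filter_upwards [((hd.isPseudoDist hs).tendsto_dst hab hβ ht).eventually_lt_const hε] with r hr
  exact ((hd.isPseudoDist hs).comm _ _).trans_lt hr

lemma _root_.CurveIn.continuousOn_snd (hd : IsMetricFamily I d) (hγ : CurveIn I d α β a b) :
    ContinuousOn β (Icc a b) :=
  have hI := hγ.2.2.2 a (left_mem_Icc.2 hγ.1.le)
  continuousOn_of_ACOn hd hI hγ.1.le (hγ.2.2.1 _ hI)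

/-- The generalized metric speed of the spatial component is measurable along a curve. -/
lemma _root_.CurveIn.aemeasurable_genSpeed (hd : IsMetricFamily I d) (hdC : CondC I d)
    (hγ : CurveIn I d α β a b) :
    AEMeasurable (fun t => genSpeed d β (α t) t) (volume.restrict (Ioo a b)) := by
  have hab := hγ.1.le
  set J := α '' Icc a b with hJ
  have hJI : J ⊆ I := by rintro _ ⟨t, ht, rfl⟩; exact hγ.2.2.2 t ht
  obtain ⟨r, hr, ω, hω0, hωc, hω⟩ := hdC.exists_isLogModulus hd hJI
    (isCompact_Icc.image_of_continuousOn hγ.continuousOn_fst)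
    (isCompact_Icc.image_of_continuousOn (hγ.continuousOn_snd hd))
  obtain ⟨g, hg⟩ := ACOn.exists_isSpeedBound hab hγ.2.1
  have hM : ∀ s, ∃ M : ℝ → ℝ, Measurable M ∧
      (s ∈ J → mSpeed (d s) β =ᵐ[volume.restrict (Ioo a b)] M) := fun s => by
    by_cases hs : s ∈ J
    · have := ((hd.isPseudoDist (hJI hs)).integrableOn_mSpeed hab
        (hγ.2.2.1 s (hJI hs))).aestronglyMeasurable.aemeasurable
      exact ⟨this.mk _, this.measurable_mk, fun _ => this.ae_eq_mk⟩
    · exact ⟨0, measurable_zero, fun h => absurd h hs⟩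
  choose M hMm hMae using hM
  have haJ : α a ∈ J := mem_image_of_mem _ (left_mem_Icc.2 hab)
  let φ := SimpleFunc.approxOn (clampCurve α a b) hg.continuous.measurable J (α a) haJ
  have hφJ : ∀ n t, φ n t ∈ J := fun n t => SimpleFunc.approxOn_mem _ haJ n t
  refine aemeasurable_of_tendsto_metrizable_ae atTop (f := fun n t => M (φ n t) t)
    (fun n => ((φ n).measurable_bind M hMm).aemeasurable) ?_
  have hcount : ∀ n, (range (φ n)).Countable := fun n => (φ n).finite_range.countable
  have hrange : ∀ n, ∀ s ∈ range (φ n), s ∈ J := by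
    rintro n _ ⟨t, rfl⟩
    exact hφJ n t
  have h1 : ∀ᵐ t ∂volume.restrict (Ioo a b), ∀ n, ∀ s ∈ range (φ n), mSpeed (d s) β t = M s t :=
    ae_all_iff.2 fun n => (ae_ball_iff (hcount n)).2 fun s hs => hMae s (hrange n s hs)
  have h2 : ∀ᵐ t, ∀ n, ∀ s' ∈ range (φ n), t ∈ Ioo a b → ∀ s ∈ J,
      Real.exp (-ω |s - s'|) * mSpeed (d s') β t ≤ genSpeed d β s t ∧
        genSpeed d β s t ≤ Real.exp (ω |s - s'|) * mSpeed (d s') β t :=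
    ae_all_iff.2 fun n => (ae_ball_iff (hcount n)).2 fun s' hs' =>
      ae_genSpeed_bounds (fun s hs => hd.isPseudoDist (hJI hs)) hω hr hab
        (fun s hs => hγ.2.2.1 s (hJI hs))
        (fun t ht => mem_image_of_mem _ (Ioo_subset_Icc_self ht)) (hrange n s' hs')
  filter_upwards [h1, ae_restrict_of_ae h2, ae_restrict_mem measurableSet_Ioo] with t ht1 ht2 htI
  have htJ : α t ∈ J := mem_image_of_mem _ (Ioo_subset_Icc_self htI)
  have hφt : Tendsto (fun n => φ n t) atTop (𝓝 (α t)) := by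
    have := SimpleFunc.tendsto_approxOn hg.continuous.measurable haJ (x := t)
      (subset_closure (by rwa [clampCurve_of_mem α (Ioo_subset_Icc_self htI)]))
    rwa [clampCurve_of_mem α (Ioo_subset_Icc_self htI)] at this
  have hωt : Tendsto (fun n => ω |α t - φ n t|) atTop (𝓝 0) := by
    have h0 : Tendsto (fun n => |α t - φ n t|) atTop (𝓝 0) := by
      simpa using (hφt.const_sub (α t)).abs
    have := hωc.tendsto.comp h0
    rwa [hω0] at this
  have hlow : Tendsto (fun n => Real.exp (-ω |α t - φ n t|) * genSpeed d β (α t) t) atTop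
      (𝓝 (genSpeed d β (α t) t)) := by
    simpa using ((Real.continuous_exp.tendsto _).comp hωt.neg).mul_const (genSpeed d β (α t) t)
  have hup : Tendsto (fun n => Real.exp (ω |α t - φ n t|) * genSpeed d β (α t) t) atTop
      (𝓝 (genSpeed d β (α t) t)) := by
    simpa using ((Real.continuous_exp.tendsto _).comp hωt).mul_const (genSpeed d β (α t) t)
  refine tendsto_of_tendsto_of_tendsto_of_le_of_le hlow hup (fun n => ?_) fun n => ?_
  · have := (ht2 n _ (mem_range_self t) htI _ htJ).2
    rw [ht1 n _ (mem_range_self t)] at this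
    calc _ ≤ Real.exp (-ω |α t - φ n t|) * (Real.exp (ω |α t - φ n t|) * M (φ n t) t) := by gcongr
      _ = _ := by rw [← mul_assoc, ← Real.exp_add]; simp
  · have := (ht2 n _ (mem_range_self t) htI _ htJ).1
    rw [ht1 n _ (mem_range_self t)] at this
    calc M (φ n t) t =
        Real.exp (ω |α t - φ n t|) * (Real.exp (-ω |α t - φ n t|) * M (φ n t) t) := by
          rw [← mul_assoc, ← Real.exp_add]; simp
      _ ≤ _ := by gcongr

lemma _root_.CurveIn.continuousOn_warping (hd : IsMetricFamily I d)
    (hcont : ContinuousOn (fun z : ℝ × X => h z.1 z.2) (I ×ˢ (univ : Set X)))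
    (hγ : CurveIn I d α β a b) : ContinuousOn (fun t => h (α t) (β t)) (Icc a b) :=
  hcont.comp (hγ.continuousOn_fst.prodMk (hγ.continuousOn_snd hd))
    fun t ht => ⟨hγ.2.2.2 t ht, mem_univ _⟩

lemma _root_.CurveIn.integrableOn_lorIntegrand (hd : IsMetricFamily I d) (hdC : CondC I d)
    (hcont : ContinuousOn (fun z : ℝ × X => h z.1 z.2) (I ×ˢ (univ : Set X)))
    (hγ : CurveIn I d α β a b) : IntegrableOn (lorIntegrand d h α β) (Ioo a b) := by
  have hw := hγ.continuousOn_warping hd hcont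
  obtain ⟨C, hC⟩ := isCompact_Icc.exists_bound_of_continuousOn hw
  have hw' : AEMeasurable (fun t => h (α t) (β t)) (volume.restrict (Ioo a b)) :=
    (hw.mono Ioo_subset_Icc_self).aemeasurable measurableSet_Ioo
  refine ((ACOn.integrableOn_deriv hγ.1.le hγ.2.1).abs.const_mul C).mono' ?_ ?_
  · exact (((hw'.pow_const 2).mul ((measurable_deriv α).pow_const 2).aemeasurable).sub
      ((hγ.aemeasurable_genSpeed hd hdC).pow_const 2)).sqrt.aestronglyMeasurable
  · filter_upwards [ae_restrict_mem measurableSet_Ioo] with t ht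
    rw [lorIntegrand, Real.norm_of_nonneg (Real.sqrt_nonneg _), ← mul_pow, ← sq_abs (_ * _), abs_mul]
    refine (sqrt_sq_sub_sq_le (by positivity) _).trans ?_
    gcongr
    exact hC t (Ioo_subset_Icc_self ht)

lemma _root_.CurveIn.intervalIntegrable_lorIntegrand (hd : IsMetricFamily I d) (hdC : CondC I d)
    (hcont : ContinuousOn (fun z : ℝ × X => h z.1 z.2) (I ×ˢ (univ : Set X)))
    (hγ : CurveIn I d α β a b) {u v : ℝ} (hu : u ∈ Icc a b) (hv : v ∈ Icc a b) :
    IntervalIntegrable (lorIntegrand d h α β) volume u v := by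
  have : IntegrableOn (lorIntegrand d h α β) (Icc a b) :=
    by
    rw [integrableOn_Icc_iff_integrableOn_Ioo]
    exact hγ.integrableOn_lorIntegrand hd hdC hcont
  exact (this.mono_set (uIcc_subset_Icc hu hv)).intervalIntegrable

end Curves

section Localization

variable {X : Type*} [TopologicalSpace X] {I : Set ℝ} {d : ℝ → X → X → ℝ} {h : ℝ → X → ℝ}
  {α : ℝ → ℝ} {β : ℝ → X} {a b : ℝ}

/-- Length elements of a causal curve near `s₀` compared with static ones: `v` is the generalized
speed, `m` the speed for `d s₀`, `p` the modulus of the time derivative. -/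
lemma sqrt_le_static {H l h p m v : ℝ} (hm : 0 ≤ m) (hh : 0 ≤ h) (hp : 0 ≤ p) (hl : 0 ≤ l)
    (hlow : l * m ≤ v) (hhH : h ≤ H) :
    √(h ^ 2 * p ^ 2 - v ^ 2) ≤ √((H * p) ^ 2 - (l * m) ^ 2) := by
  refine Real.sqrt_le_sqrt (sub_le_sub ?_ ?_)
  · rw [← mul_pow]
    gcongr
  · gcongr

lemma static_le_sqrt_add {H l h₁ h κ p m v : ℝ} (hp : 0 ≤ p) (hl : 0 ≤ l) (hl1 : l ≤ 1)
    (hv : 0 ≤ v) (hup : l * v ≤ m) (hvh : v ^ 2 ≤ h ^ 2 * p ^ 2) (hh₁ : 0 ≤ h₁) (hh : h₁ ≤ h)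
    (hκ : 0 ≤ κ) (hH : H ^ 2 - l ^ 4 * h₁ ^ 2 ≤ κ ^ 2) :
    √((H * p) ^ 2 - (l * m) ^ 2) ≤ √(h ^ 2 * p ^ 2 - v ^ 2) + κ * p := by
  have h0 : 0 ≤ h ^ 2 * p ^ 2 - v ^ 2 := sub_nonneg.2 hvh
  refine Real.sqrt_le_iff.2 ⟨by positivity, ?_⟩
  have h1 : l ^ 4 * v ^ 2 ≤ (l * m) ^ 2 := by
    calc l ^ 4 * v ^ 2 = (l * (l * v)) ^ 2 := by ring
      _ ≤ (l * m) ^ 2 := by gcongr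
  have h2 : l ^ 4 * (h ^ 2 * p ^ 2 - v ^ 2) ≤ h ^ 2 * p ^ 2 - v ^ 2 :=
    mul_le_of_le_one_left h0 (pow_le_one₀ hl hl1)
  have h3 : (H ^ 2 - l ^ 4 * h ^ 2) * p ^ 2 ≤ κ ^ 2 * p ^ 2 := by
    have : l ^ 4 * h₁ ^ 2 ≤ l ^ 4 * h ^ 2 := by gcongr
    gcongr
    linarith
  have h4 : 0 ≤ √(h ^ 2 * p ^ 2 - v ^ 2) * (κ * p) := by positivity
  have h5 := Real.sq_sqrt h0
  nlinarith

lemma exists_small_defect {h₀ κ : ℝ} (hh₀ : 0 < h₀) (hκ : 0 < κ) :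
    ∃ η > 0, η < h₀ ∧ (h₀ + η) ^ 2 - Real.exp (-η) ^ 4 * (h₀ - η) ^ 2 ≤ κ ^ 2 := by
  have hc : Continuous fun η : ℝ => (h₀ + η) ^ 2 - Real.exp (-η) ^ 4 * (h₀ - η) ^ 2 := by
    fun_prop
  have h0 := hc.tendsto 0
  simp only [add_zero, neg_zero, Real.exp_zero, one_pow, sub_zero, one_mul, sub_self] at h0
  have h1 : ∀ᶠ η in 𝓝[>] (0 : ℝ),
      (h₀ + η) ^ 2 - Real.exp (-η) ^ 4 * (h₀ - η) ^ 2 < κ ^ 2 :=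
    (h0.eventually_lt_const (by positivity)).filter_mono nhdsWithin_le_nhds
  have h2 : ∀ᶠ η in 𝓝[>] (0 : ℝ), η < h₀ :=
    (eventually_lt_nhds hh₀).filter_mono nhdsWithin_le_nhds
  obtain ⟨η, h1, h2, h3⟩ := (h1.and (h2.and self_mem_nhdsWithin)).exists
  exact ⟨η, h3, h2, h1.le⟩

/-- Pointwise speed comparison for a causal curve staying in a small set. -/
lemma _root_.CausalCurve.ae_speed_bounds (hd : IsMetricFamily I d)
    (hpos : ∀ s ∈ I, ∀ x : X, 0 < h s x) (hγ : CausalCurve I d h α β a b) {u v : ℝ}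
    (hau : a ≤ u) (huv : u ≤ v) (hvb : v ≤ b) {J : Set ℝ} {K : Set X} {r η s₀ : ℝ} {ω : ℝ → ℝ}
    (hJI : J ⊆ I) (hs₀ : s₀ ∈ J) (hr : 0 < r) (hω : IsLogModulus d J K r ω)
    (hJ : ∀ t ∈ Icc u v, α t ∈ J) (hK : ∀ t ∈ Icc u v, β t ∈ K)
    (hη : ∀ t ∈ Icc u v, ω |α t - s₀| ≤ η) :
    ∀ᵐ t, t ∈ Ioo u v → 0 ≤ mSpeed (d s₀) β t ∧ 0 ≤ genSpeed d β (α t) t ∧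
      Real.exp (-η) * mSpeed (d s₀) β t ≤ genSpeed d β (α t) t ∧
      Real.exp (-η) * genSpeed d β (α t) t ≤ mSpeed (d s₀) β t ∧
      genSpeed d β (α t) t ≤ h (α t) (β t) * |deriv α t| := by
  have hmono : ∀ s ∈ J, ACOn (d s) β u v := fun s hs => (hγ.1.2.2.1 s (hJI hs)).mono hau hvb
  filter_upwards [ae_genSpeed_bounds (fun s hs => hd.isPseudoDist (hJI hs)) hω hr huv hmono
    (fun t ht => hK t (Ioo_subset_Icc_self ht)) hs₀, hγ.2.2] with t ht hc htI
  have htI' := Ioo_subset_Icc_self htI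
  obtain ⟨h1, h2⟩ := ht htI (α t) (hJ t htI')
  have hm : 0 ≤ mSpeed (d s₀) β t :=
    mSpeed_nonneg (fun x y => (hd.isPseudoDist (hJI hs₀)).nonneg x y) β t
  have hωη := hη t htI'
  have hlow : Real.exp (-η) * mSpeed (d s₀) β t ≤ genSpeed d β (α t) t := by
    refine le_trans ?_ h1
    gcongr
  have hv : 0 ≤ genSpeed d β (α t) t := le_trans (by positivity) hlow
  refine ⟨hm, hv, hlow, ?_, ?_⟩
  · calc Real.exp (-η) * genSpeed d β (α t) t
        ≤ Real.exp (-η) * (Real.exp η * mSpeed (d s₀) β t) := by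
          gcongr
          refine h2.trans ?_
          gcongr
      _ = mSpeed (d s₀) β t := by rw [← mul_assoc, ← Real.exp_add]; simp
  · have hpos' := hpos (α t) (hJI (hJ t htI')) (β t)
    refine le_of_abs_le (abs_le_of_sq_le_sq ?_ (by positivity))
    rw [mul_pow, sq_abs]
    exact hc ⟨hau.trans_lt htI.1, htI.2.trans_le hvb⟩

/-- The upper semicontinuity estimate on short parameter intervals. -/
lemma eventually_integral_lorIntegrand_le_local [LocallyCompactSpace X] (hIopen : IsOpen I)
    (hd : IsMetricFamily I d) (hdC : CondC I d) (hpos : ∀ s ∈ I, ∀ x : X, 0 < h s x)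
    (hcont : ContinuousOn (fun z : ℝ × X => h z.1 z.2) (I ×ˢ (univ : Set X)))
    {αn : ℕ → ℝ → ℝ} {βn : ℕ → ℝ → X} (hn : ∀ n, CausalCurve I d h (αn n) (βn n) a b)
    (hγ : CausalCurve I d h α β a b)
    (hlim : ∀ t ∈ Icc a b, Tendsto (fun p : ℕ × ℝ => (αn p.1 p.2, βn p.1 p.2))
      (atTop ×ˢ 𝓝[Icc a b] t) (𝓝 (α t, β t)))
    {κ : ℝ} (hκ : 0 < κ) {t₀ : ℝ} (ht₀ : t₀ ∈ Icc a b) :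
    ∃ U, IsOpen U ∧ t₀ ∈ U ∧ ∀ u ∈ Icc a b, ∀ v ∈ Icc a b, u ≤ v → Icc u v ⊆ U → ∀ ε > 0,
      ∀ᶠ n in atTop, ∫ t in u..v, lorIntegrand d h (αn n) (βn n) t ≤
        (∫ t in u..v, lorIntegrand d h α β t) + κ * (∫ t in u..v, |deriv α t|) + ε := by
  have hs₀ : α t₀ ∈ I := hγ.1.2.2.2 t₀ ht₀
  set s₀ := α t₀ with hs₀_def
  set h₀ := h s₀ (β t₀) with hh₀
  have hh₀pos : 0 < h₀ := hpos _ hs₀ _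
  obtain ⟨J, hJc, hJmem, hJI⟩ := exists_compact_subset hIopen hs₀
  obtain ⟨K, hKc, hKmem⟩ := exists_compact_mem_nhds (β t₀)
  obtain ⟨r, hr, ω, hω0, hωc, hω⟩ := hdC.exists_isLogModulus hd hJI hJc hKc
  obtain ⟨η, hη, hηh, hdef⟩ := exists_small_defect hh₀pos hκ
  have hs₀J : s₀ ∈ J := interior_subset hJmem
  have hgood : ∀ᶠ z : ℝ × X in 𝓝 (s₀, β t₀), z.1 ∈ J ∧ z.2 ∈ K ∧ ω |z.1 - s₀| ≤ η ∧
      h₀ - η ≤ h z.1 z.2 ∧ h z.1 z.2 ≤ h₀ + η := by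
    have hfst : Tendsto (fun z : ℝ × X => z.1) (𝓝 (s₀, β t₀)) (𝓝 s₀) := continuous_fst.tendsto _
    have hsnd : Tendsto (fun z : ℝ × X => z.2) (𝓝 (s₀, β t₀)) (𝓝 (β t₀)) :=
      continuous_snd.tendsto _
    have hωz : Tendsto (fun z : ℝ × X => ω |z.1 - s₀|) (𝓝 (s₀, β t₀)) (𝓝 0) := by
      have h1 : Tendsto (fun z : ℝ × X => |z.1 - s₀|) (𝓝 (s₀, β t₀)) (𝓝 0) := by
        simpa using (hfst.sub_const s₀).abs
      have := hωc.tendsto.comp h1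
      rwa [hω0] at this
    have hhz : Tendsto (fun z : ℝ × X => h z.1 z.2) (𝓝 (s₀, β t₀)) (𝓝 h₀) :=
      (hcont.continuousAt ((hIopen.prod isOpen_univ).mem_nhds ⟨hs₀, mem_univ _⟩)).tendsto
    filter_upwards [hfst.eventually (mem_interior_iff_mem_nhds.1 hJmem), hsnd.eventually hKmem,
      hωz.eventually_le_const hη, hhz.eventually_const_le (sub_lt_self h₀ hη),
      hhz.eventually_le_const (lt_add_of_pos_right h₀ hη)] with z h1 h2 h3 h4 h5
    exact ⟨h1, h2, h3, h4, h5⟩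
  obtain ⟨pa, hpa, pb, hpb, hpab⟩ := eventually_prod_iff.1 ((hlim t₀ ht₀).eventually hgood)
  have hlim₀ : ∀ᶠ t in 𝓝[Icc a b] t₀, _ :=
    ((hγ.1.continuousOn_fst t₀ ht₀).prodMk_nhds (hγ.1.continuousOn_snd hd t₀ ht₀)).eventually hgood
  obtain ⟨U, hU, htU, hUsub⟩ := mem_nhdsWithin.1 (hpb.and hlim₀)
  refine ⟨U, hU, htU, fun u hu v hv huv huvU ε hε => ?_⟩
  have hsub : Icc u v ⊆ Icc a b := Icc_subset_Icc hu.1 hv.2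
  have hgood₀ : ∀ t ∈ Icc u v, _ := fun t ht => (hUsub ⟨huvU ht, hsub ht⟩).2
  have hgoodn : ∀ᶠ n in atTop, ∀ t ∈ Icc u v, _ :=
    hpa.mono fun n hn t ht => hpab hn (hUsub ⟨huvU ht, hsub ht⟩).1
  have hspeed₀ := hγ.ae_speed_bounds hd hpos hu.1 huv hv.2 hJI hs₀J hr hω
    (fun t ht => (hgood₀ t ht).1) (fun t ht => (hgood₀ t ht).2.1)
    (fun t ht => (hgood₀ t ht).2.2.1)
  have hspeedn := hgoodn.mono fun n hg => (hn n).ae_speed_bounds hd hpos hu.1 huv hv.2 hJI hs₀J hr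
    hω (fun t ht => (hg t ht).1) (fun t ht => (hg t ht).2.1) (fun t ht => (hg t ht).2.2.1)
  have hdist := hd.isPseudoDist hs₀
  have hIoo : ∀ t ∈ Ioo u v, t ∈ Ioo a b := fun t ht => ⟨hu.1.trans_lt ht.1, ht.2.trans_le hv.2⟩
  have hH : 0 ≤ h₀ + η := by positivity
  have hac := hγ.1.2.1.mono hu.1 hv.2
  have hacβ := (hγ.1.2.2.1 s₀ hs₀).mono hu.1 hv.2
  have hacn := fun n => (hn n).1.2.1.mono hu.1 hv.2
  have hacβn := fun n => ((hn n).1.2.2.1 s₀ hs₀).mono hu.1 hv.2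
  have hptw : ∀ t ∈ Icc u v, Tendsto (fun n => (αn n t, βn n t)) atTop (𝓝 (α t, β t)) :=
    fun t ht => (hlim t (hsub ht)).comp (tendsto_id.prodMk
      (tendsto_const_pure.mono_right (pure_le_nhdsWithin (hsub ht))))
  have hstatic := hdist.eventually_integral_static_le hH (Real.exp_pos (-η)).le huv hac hacβ hacn
    hacβn (fun n => (hn n).2.1.imp (fun hf => hf.mono fun t ht htI => ht (hIoo t htI))
      (fun hf => hf.mono fun t ht htI => ht (hIoo t htI)))
    (by
      filter_upwards [hspeedn, hgoodn] with n hsn hg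
      filter_upwards [hsn] with t ht htI
      obtain ⟨-, -, h1, -, h2⟩ := ht htI
      refine h1.trans (h2.trans ?_)
      gcongr
      exact (hg t (Ioo_subset_Icc_self htI)).2.2.2.2)
    (fun t ht => (continuous_fst.tendsto _).comp (hptw t ht))
    (fun t ht => by
      refine tendsto_order.2 ⟨fun c hc => .of_forall fun n => hc.trans_le (hdist.nonneg _ _),
        fun c hc => ?_⟩
      filter_upwards [((continuous_snd.tendsto _).comp (hptw t ht)).eventually
        (((hd s₀ hs₀).2.2.2.2 (β t)).mem_of_mem hc)] with n hn
      exact (hdist.comm _ _).trans_lt hn) hε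
  have hint : IntervalIntegrable (fun t => |deriv α t|) volume u v :=
    (intervalIntegrable_iff_integrableOn_Ioo_of_le huv).2 (hac.integrableOn_deriv huv).abs
  have hint₀ := hγ.1.intervalIntegrable_lorIntegrand hd hdC hcont hu hv
  have hle₀ : ∫ t in u..v,
      √(((h₀ + η) * |deriv α t|) ^ 2 - (Real.exp (-η) * mSpeed (d s₀) β t) ^ 2) ≤
      (∫ t in u..v, lorIntegrand d h α β t) + κ * (∫ t in u..v, |deriv α t|) := by
    rw [← intervalIntegral.integral_const_mul, ← intervalIntegral.integral_add hint₀
      (hint.const_mul κ), intervalIntegral.integral_of_le huv, intervalIntegral.integral_of_le huv,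
      integral_Ioc_eq_integral_Ioo, integral_Ioc_eq_integral_Ioo]
    refine setIntegral_mono_on_ae ?_ ?_ measurableSet_Ioo ?_
    · rw [← intervalIntegrable_iff_integrableOn_Ioo_of_le huv]
      exact hdist.intervalIntegrable_static hH huv hac hacβ
    · rw [← intervalIntegrable_iff_integrableOn_Ioo_of_le huv]
      exact hint₀.add (hint.const_mul κ)
    · filter_upwards [hspeed₀] with t ht htI
      obtain ⟨h1, h2, h3, h4, h5⟩ := ht htI
      rw [lorIntegrand, ← sq_abs (deriv α t)]
      refine static_le_sqrt_add (abs_nonneg _) (Real.exp_pos _).le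
        (Real.exp_le_one_iff.2 (neg_nonpos.2 hη.le)) h2 h4 ?_ (sub_nonneg.2 hηh.le)
        (hgood₀ t (Ioo_subset_Icc_self htI)).2.2.2.1 hκ.le hdef
      rw [← mul_pow]
      gcongr
  filter_upwards [hstatic, hspeedn, hgoodn] with n hst hsn hg
  refine le_trans ?_ (hst.trans (add_le_add_left hle₀ ε))
  rw [intervalIntegral.integral_of_le huv, intervalIntegral.integral_of_le huv,
    integral_Ioc_eq_integral_Ioo, integral_Ioc_eq_integral_Ioo]
  refine setIntegral_mono_on_ae ?_ ?_ measurableSet_Ioo ?_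
  · rw [← intervalIntegrable_iff_integrableOn_Ioo_of_le huv]
    exact (hn n).1.intervalIntegrable_lorIntegrand hd hdC hcont hu hv
  · rw [← intervalIntegrable_iff_integrableOn_Ioo_of_le huv]
    exact hdist.intervalIntegrable_static hH huv (hacn n) (hacβn n)
  · filter_upwards [hsn] with t ht htI
    obtain ⟨h1, h2, h3, h4, h5⟩ := ht htI
    have hgt := hg t (Ioo_subset_Icc_self htI)
    rw [lorIntegrand, ← sq_abs (deriv (αn n) t)]
    exact sqrt_le_static h1 (hpos _ (hJI hgt.1) _).le (abs_nonneg _) (Real.exp_pos _).le h3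
      hgt.2.2.2.2

end Localization

section Globalization

variable {X : Type*} [TopologicalSpace X] {I : Set ℝ} {d : ℝ → X → X → ℝ} {h : ℝ → X → ℝ}
  {α : ℝ → ℝ} {β : ℝ → X} {a b : ℝ}

/-- Uniform convergence of curves implies joint convergence in index and parameter. -/
lemma tendsto_prod_of_uniform (hd : IsMetricFamily I d) {D : ℝ × X → ℝ × X → ℝ}
    (hD : IsCompatibleProdMetric D) {αn : ℕ → ℝ → ℝ} {βn : ℕ → ℝ → X}
    (hγ : CurveIn I d α β a b)
    (hunif : ∀ ε > (0 : ℝ), ∀ᶠ j in atTop,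
      ∀ t ∈ Icc a b, D (αn j t, βn j t) (α t, β t) < ε) {t : ℝ} (ht : t ∈ Icc a b) :
    Tendsto (fun p : ℕ × ℝ => (αn p.1 p.2, βn p.1 p.2)) (atTop ×ˢ 𝓝[Icc a b] t)
      (𝓝 (α t, β t)) := by
  obtain ⟨-, -, hsymm, htri, hbasis⟩ := hD
  refine (hbasis _).tendsto_right_iff.2 fun ε hε => ?_
  have hcont : Tendsto (fun r => (α r, β r)) (𝓝[Icc a b] t) (𝓝 (α t, β t)) :=
    (hγ.continuousOn_fst t ht).prodMk_nhds (hγ.continuousOn_snd hd t ht)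
  have h1 : ∀ᶠ r in 𝓝[Icc a b] t, D (α t, β t) (α r, β r) < ε / 2 ∧ r ∈ Icc a b :=
    (hcont.eventually ((hbasis _).mem_of_mem (half_pos hε))).and self_mem_nhdsWithin
  filter_upwards [(hunif _ (half_pos hε)).prod_mk h1] with p hp
  have h2 := hp.1 p.2 hp.2.2
  rw [hsymm] at h2
  exact (htri _ _ _).trans_lt ((add_lt_add hp.2.1 h2).trans_eq (add_halves ε))

lemma eventually_lorLen_le [LocallyCompactSpace X] (hIopen : IsOpen I)
    (hd : IsMetricFamily I d) (hdC : CondC I d) (hpos : ∀ s ∈ I, ∀ x : X, 0 < h s x)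
    (hcont : ContinuousOn (fun z : ℝ × X => h z.1 z.2) (I ×ˢ (univ : Set X)))
    {αn : ℕ → ℝ → ℝ} {βn : ℕ → ℝ → X} (hn : ∀ n, CausalCurve I d h (αn n) (βn n) a b)
    (hγ : CausalCurve I d h α β a b)
    (hlim : ∀ t ∈ Icc a b, Tendsto (fun p : ℕ × ℝ => (αn p.1 p.2, βn p.1 p.2))
      (atTop ×ˢ 𝓝[Icc a b] t) (𝓝 (α t, β t)))
    {κ : ℝ} (hκ : 0 < κ) {ε : ℝ} (hε : 0 < ε) :
    ∀ᶠ n in atTop, lorLen d h (αn n) (βn n) a b ≤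
      lorLen d h α β a b + κ * (∫ t in a..b, |deriv α t|) + ε := by
  have hab : a ≤ b := hγ.1.1.le
  choose! U hUo hUmem hU using fun t (ht : t ∈ Icc a b) =>
    eventually_integral_lorIntegrand_le_local hIopen hd hdC hpos hcont hn hγ hlim hκ ht
  obtain ⟨t, ht0, htmono, ⟨N, hN⟩, ht⟩ := exists_monotone_Icc_subset_open_cover_Icc hab
    (c := fun i : Icc a b => (Subtype.val ⁻¹' U i : Set (Icc a b)))
    (fun i => (hUo i i.2).preimage continuous_subtype_val)
    (fun s _ => mem_iUnion.2 ⟨s, hUmem s s.2⟩)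
  have hderiv : IntegrableOn (fun t => |deriv α t|) (Icc a b) := by
    rw [integrableOn_Icc_iff_integrableOn_Ioo]
    exact (ACOn.integrableOn_deriv hab hγ.1.2.1).abs
  have key : ∀ k, ∀ ε > 0, ∀ᶠ n in atTop, ∫ r in a..(t k : ℝ), lorIntegrand d h (αn n) (βn n) r ≤
      (∫ r in a..(t k : ℝ), lorIntegrand d h α β r) +
        κ * (∫ r in a..(t k : ℝ), |deriv α r|) + ε := by
    intro k
    induction k with
    | zero =>
      intro ε hε
      simp [ht0, hε.le]
    | succ k ih =>
      intro ε hε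
      obtain ⟨i, hi⟩ := ht k
      have ha : a ∈ Icc a b := left_mem_Icc.2 hab
      have hk := (t k).2
      have hk' := (t (k + 1)).2
      have hIccU : Icc (t k : ℝ) (t (k + 1)) ⊆ U i := fun r hr =>
        hi (show (⟨r, hk.1.trans hr.1, hr.2.trans hk'.2⟩ : Icc a b) ∈ Icc (t k) (t (k + 1)) from hr)
      filter_upwards [ih _ (half_pos hε), hU i i.2 _ hk _ hk' (htmono k.le_succ) hIccU _
        (half_pos hε)] with n h1 h2
      rw [← intervalIntegral.integral_add_adjacent_intervals
          ((hn n).1.intervalIntegrable_lorIntegrand hd hdC hcont ha hk)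
          ((hn n).1.intervalIntegrable_lorIntegrand hd hdC hcont hk hk'),
        ← intervalIntegral.integral_add_adjacent_intervals
          (hγ.1.intervalIntegrable_lorIntegrand hd hdC hcont ha hk)
          (hγ.1.intervalIntegrable_lorIntegrand hd hdC hcont hk hk'),
        ← intervalIntegral.integral_add_adjacent_intervals
          (hderiv.mono_set (uIcc_subset_Icc ha hk)).intervalIntegrable
          (hderiv.mono_set (uIcc_subset_Icc hk hk')).intervalIntegrable]
      linarith
  have := key N ε hε
  rwa [hN N le_rfl] at this

end Globalization

end LorentzianLength

/-- **Upper semicontinuity of the Lorentzian length** (Proposition 4.6): if causal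
curves `γ_j` converge uniformly to a causal curve `γ`, then
`limsup τ(γ_j) ≤ τ(γ)`. -/
theorem lorLen_upper_semicontinuous {X : Type*} [TopologicalSpace X]
    [LocallyCompactSpace X]
    (I : Set ℝ) (hIopen : IsOpen I) (hIord : I.OrdConnected) (hIne : I.Nonempty)
    (d : ℝ → X → X → ℝ) (hd : IsMetricFamily I d) (hdC : CondC I d)
    (h : ℝ → X → ℝ) (hpos : ∀ s ∈ I, ∀ x : X, 0 < h s x)
    (hcont : ContinuousOn (fun z : ℝ × X => h z.1 z.2) (I ×ˢ (Set.univ : Set X)))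
    (D : (ℝ × X) → (ℝ × X) → ℝ) (hD : IsCompatibleProdMetric D)
    (a b : ℝ) (hab : a < b)
    (α : ℕ → ℝ → ℝ) (β : ℕ → ℝ → X) (α₀ : ℝ → ℝ) (β₀ : ℝ → X)
    (hcausal : ∀ j, CausalCurve I d h (α j) (β j) a b)
    (hcausal₀ : CausalCurve I d h α₀ β₀ a b)
    (hunif : ∀ ε > (0 : ℝ), ∀ᶠ j in Filter.atTop,
      ∀ t ∈ Set.Icc a b, D (α j t, β j t) (α₀ t, β₀ t) < ε) :
    Filter.limsup (fun j => lorLen d h (α j) (β j) a b) Filter.atTop ≤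
      lorLen d h α₀ β₀ a b := by
  have key := fun κ hκ ε hε => LorentzianLength.eventually_lorLen_le hIopen hd hdC hpos hcont
    hcausal hcausal₀
    (fun t ht => LorentzianLength.tendsto_prod_of_uniform hd hD hcausal₀.1 hunif ht)
    (κ := κ) hκ (ε := ε) hε
  refine le_of_forall_pos_le_add fun ε hε => ?_
  have hC : 0 ≤ ∫ t in a..b, |deriv α₀ t| :=
    intervalIntegral.integral_nonneg hab.le fun _ _ => abs_nonneg _
  set C := ∫ t in a..b, |deriv α₀ t|
  have hκC : ε / 2 / (C + 1) * C ≤ ε / 2 := by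
    rw [div_mul_eq_mul_div, div_le_iff₀ (by positivity)]
    nlinarith
  refine limsup_le_of_le (IsBoundedUnder.isCoboundedUnder_le (isBoundedUnder_of
    ⟨0, fun j => LorentzianLength.lorLen_nonneg d h (α j) (β j) hab.le⟩)) ?_
  filter_upwards [key (ε / 2 / (C + 1)) (by positivity) (ε / 2) (half_pos hε)] with j hj
  linarith
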